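/- arXiv:2105.09709 — 9 statements merged into one kernel-verified Lean document; each statement's English description precedes it below -/
import Mathlib

section
/- Let f : (0,∞) → ℝ be a function of at most linear growth (there is C > 0 with f(t) ≤ C(t+1) for all t > 0), and suppose f takes at least one positive value. Then for every x > 0, G[F[f]](x) = f_𝒜(x), i.e. the composition G∘F applied to f equals the 𝒜-hull of f. -/
/-!
For `s > 0`, `F[f](s)` is the least `c` such that the affine function `u ↦ c (1 + u / s)` majorizes
`f`, and this `c` is positive because `f` takes a positive value. Each value
`F[f](x t) (1 + 1 / t)` is the value at `x` of the majorant with `s = x t`, which belongs to 𝒜, so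
`G[F[f]](x) ≥ f_𝒜(x)`.

Conversely, a majorant `φ ∈ 𝒜` has a supporting line `u ↦ a + b u` at `x`
(`exists_support_line`) with `a, b ≥ 0`: monotonicity gives `b ≥ 0`, and nonnegativity near `0`
gives `a ≥ 0`. Replacing `a, b` by `a + ε, b + ε` makes `s = (a + ε) / (b + ε)` meaningful, and then
`F[f](s) ≤ a + ε`, whence `G[F[f]](x) ≤ φ x + ε (1 + x)` (`Gtr_Ftr_le_affine`).
-/

open Set Filter

/-- The set of values `f (x*t) / (t+1)` for `t > 0`. -/
def FSet (f : ℝ → ℝ) (x : ℝ) : Set ℝ := {y : ℝ | ∃ t : ℝ, 0 < t ∧ y = f (x * t) / (t + 1)}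

/-- The transform `F[f](x) = sup_{t>0} f(xt)/(t+1)`. -/
noncomputable def Ftr (f : ℝ → ℝ) (x : ℝ) : ℝ := sSup (FSet f x)

/-- The set of values `f (x*t) * (1 + 1/t)` for `t > 0`. -/
def GSet (f : ℝ → ℝ) (x : ℝ) : Set ℝ := {y : ℝ | ∃ t : ℝ, 0 < t ∧ y = f (x * t) * (1 + 1 / t)}

/-- The transform `G[f](x) = inf_{t>0} f(xt)(1+1/t)`. -/
noncomputable def Gtr (f : ℝ → ℝ) (x : ℝ) : ℝ := sInf (GSet f x)

/-- The class 𝒜: concave, nondecreasing, nonnegative functions on (0,∞). -/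
def InClassA (φ : ℝ → ℝ) : Prop :=
  ConcaveOn ℝ (Ioi (0:ℝ)) φ ∧ MonotoneOn φ (Ioi (0:ℝ)) ∧ ∀ x > (0:ℝ), 0 ≤ φ x

/-- The class ℬ: concave, nonincreasing, nonpositive functions on (0,∞) with an
asymptote `y = k t` through the origin. -/
def InClassB (φ : ℝ → ℝ) : Prop :=
  ConcaveOn ℝ (Ioi (0:ℝ)) φ ∧ AntitoneOn φ (Ioi (0:ℝ)) ∧ (∀ x > (0:ℝ), φ x ≤ 0) ∧
    ∃ k : ℝ, Tendsto (fun t => φ t - k * t) atTop (nhds 0)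

/-- Values at `x` of members of 𝒜 majorizing `f` on (0,∞). -/
def ASet (f : ℝ → ℝ) (x : ℝ) : Set ℝ :=
  {y : ℝ | ∃ φ : ℝ → ℝ, InClassA φ ∧ (∀ t > (0:ℝ), f t ≤ φ t) ∧ y = φ x}

/-- The 𝒜-hull of `f`. -/
noncomputable def hullA (f : ℝ → ℝ) (x : ℝ) : ℝ := sInf (ASet f x)

/-- Values at `x` of members of ℬ majorizing `f` on (0,∞). -/
def BSet (f : ℝ → ℝ) (x : ℝ) : Set ℝ :=
  {y : ℝ | ∃ φ : ℝ → ℝ, InClassB φ ∧ (∀ t > (0:ℝ), f t ≤ φ t) ∧ y = φ x}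

/-- The ℬ-hull of `f`. -/
noncomputable def hullB (f : ℝ → ℝ) (x : ℝ) : ℝ := sInf (BSet f x)

lemma FSet_bddAbove {f : ℝ → ℝ} {C : ℝ} (hC : 0 < C)
    (hlin : ∀ t > (0:ℝ), f t ≤ C * (t + 1)) {s : ℝ} (hs : 0 < s) : BddAbove (FSet f s) := by
  refine ⟨C * (s + 1), ?_⟩
  rintro y ⟨t, ht, rfl⟩
  rw [div_le_iff₀ (by linarith)]
  have := hlin (s * t) (mul_pos hs ht)
  nlinarith [mul_pos hC hs, mul_pos hC ht]

/-- `u ↦ F[f](s) (1 + u / s)` is a majorant of `f`. -/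
lemma le_Ftr_mul {f : ℝ → ℝ} {s : ℝ} (hs : 0 < s) (hb : BddAbove (FSet f s)) {u : ℝ}
    (hu : 0 < u) : f u ≤ Ftr f s * (1 + u / s) := by
  have h : f (s * (u / s)) / (u / s + 1) ≤ Ftr f s := le_csSup hb ⟨u / s, div_pos hu hs, rfl⟩
  rw [mul_div_cancel₀ u hs.ne', div_le_iff₀ (by positivity)] at h
  linarith

lemma Ftr_pos {f : ℝ → ℝ} {s : ℝ} (hs : 0 < s) (hb : BddAbove (FSet f s))
    (hpos : ∃ t > (0:ℝ), 0 < f t) : 0 < Ftr f s := by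
  obtain ⟨u, hu, hfu⟩ := hpos
  have h := le_Ftr_mul hs hb hu
  exact pos_of_mul_pos_left (hfu.trans_le h) (by positivity)

lemma inClassA_affine {a b : ℝ} (ha : 0 ≤ a) (hb : 0 ≤ b) : InClassA (fun u => a + b * u) := by
  refine ⟨⟨convex_Ioi 0, ?_⟩, ?_, ?_⟩
  · intro u _ v _ p q _ _ hpq
    simp only [smul_eq_mul]
    apply le_of_eq
    linear_combination a * hpq
  · intro u _ v _ huv
    have := mul_le_mul_of_nonneg_left huv hb
    simpa using this
  · intro u hu
    have : 0 ≤ b * u := mul_nonneg hb hu.le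
    simpa using add_nonneg ha this

/-- A member of 𝒜 has a supporting line at each point, with nonnegative coefficients. The slope is
the right derivative, written as the supremum of the slopes of chords to the right of `x`. -/
lemma exists_support_line {φ : ℝ → ℝ} (hφ : InClassA φ) {x : ℝ} (hx : 0 < x) :
    ∃ a b : ℝ, 0 ≤ a ∧ 0 ≤ b ∧ a + b * x = φ x ∧ ∀ u > (0:ℝ), φ u ≤ a + b * u := by
  obtain ⟨hconc, hmono, hnn⟩ := hφ
  set S : Set ℝ := (fun y => (φ y - φ x) / (y - x)) '' Ioi x with hS
  have hle : ∀ z, 0 < z → z < x → ∀ m ∈ S, m ≤ (φ x - φ z) / (x - z) := by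
    rintro z hz hzx _ ⟨y, hy, rfl⟩
    exact hconc.slope_anti_adjacent hz (hx.trans hy) hzx hy
  have hne : S.Nonempty := ⟨_, x + 1, by simp, rfl⟩
  have hbdd : BddAbove S := ⟨_, hle (x / 2) (by linarith) (by linarith)⟩
  have hb : 0 ≤ sSup S := by
    refine le_csSup_of_le hbdd ⟨x + 1, by simp, rfl⟩ ?_
    have := hmono (mem_Ioi.2 hx) (mem_Ioi.2 (by linarith : (0:ℝ) < x + 1)) (by linarith)
    simpa using this
  have hmaj : ∀ u > (0:ℝ), φ u ≤ (φ x - sSup S * x) + sSup S * u := by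
    intro u hu
    rcases lt_trichotomy u x with h | h | h
    · have := csSup_le hne (hle u hu h)
      rw [le_div_iff₀ (by linarith)] at this
      linarith
    · subst h; linarith
    · have := le_csSup hbdd ⟨u, h, rfl⟩
      rw [div_le_iff₀ (by linarith)] at this
      linarith
  refine ⟨φ x - sSup S * x, sSup S, ?_, hb, by ring, hmaj⟩
  -- The line is nonnegative on `(0, ∞)`; a negative intercept would fail for small `u`.
  by_contra! hneg
  set a := φ x - sSup S * x
  have hu : 0 < -a / (2 * (sSup S + 1)) := div_pos (by linarith) (by linarith)
  have h1 := (hnn _ hu).trans (hmaj _ hu)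
  have h2 : (sSup S + 1) * (-a / (2 * (sSup S + 1))) = -a / 2 := by
    field_simp
  nlinarith

/-- `G[F[f]]` lies below every majorant `u ↦ a + b u` of `f` with `a, b > 0`. -/
lemma Gtr_Ftr_le_affine {f : ℝ → ℝ} {x a b : ℝ} (hx : 0 < x) (ha : 0 < a) (hb : 0 < b)
    (hbdd : BddBelow (GSet (Ftr f) x)) (hmaj : ∀ u > (0:ℝ), f u ≤ a + b * u) :
    Gtr (Ftr f) x ≤ a + b * x := by
  -- The line is `a (1 + u / s)` with `s = a / b = x t`.
  have ht : 0 < a / (b * x) := by positivity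
  have hs : x * (a / (b * x)) = a / b := by field_simp
  refine csInf_le_of_le hbdd ⟨a / (b * x), ht, rfl⟩ ?_
  have hF : Ftr f (a / b) ≤ a := by
    refine csSup_le ⟨_, 1, one_pos, rfl⟩ ?_
    rintro y ⟨t, ht, rfl⟩
    rw [div_le_iff₀ (by linarith)]
    have h := hmaj (a / b * t) (by positivity)
    have h' : b * (a / b * t) = a * t := by field_simp
    linarith
  rw [hs]
  calc Ftr f (a / b) * (1 + 1 / (a / (b * x))) ≤ a * (1 + 1 / (a / (b * x))) :=
        mul_le_mul_of_nonneg_right hF (by positivity)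
    _ = a + b * x := by field_simp

/-- if `f` has at most linear growth and takes a positive value,
then `G[F[f]]` equals the 𝒜-hull of `f`. -/
theorem stmt_0 (f : ℝ → ℝ) (C : ℝ) (hC : 0 < C)
    (hlin : ∀ t > (0:ℝ), f t ≤ C * (t + 1))
    (hpos : ∃ t > (0:ℝ), 0 < f t) :
    ∀ x > (0:ℝ), Gtr (Ftr f) x = hullA f x := by
  intro x hx
  have hbd : ∀ s > (0:ℝ), BddAbove (FSet f s) := fun s hs => FSet_bddAbove hC hlin hs
  have hGbdd : BddBelow (GSet (Ftr f) x) := by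
    refine ⟨0, ?_⟩
    rintro y ⟨t, ht, rfl⟩
    have hs := mul_pos hx ht
    exact mul_nonneg (Ftr_pos hs (hbd _ hs) hpos).le (by positivity)
  have hAbdd : BddBelow (ASet f x) := by
    refine ⟨0, ?_⟩
    rintro y ⟨φ, hφ, _, rfl⟩
    exact hφ.2.2 x hx
  have hAne : (ASet f x).Nonempty :=
    ⟨_, _, inClassA_affine hC.le hC.le, fun t ht => by linarith [hlin t ht], rfl⟩
  apply le_antisymm
  · refine le_csInf hAne ?_
    rintro y ⟨φ, hφ, hfφ, rfl⟩
    obtain ⟨a, b, ha, hb, hab, hmaj⟩ := exists_support_line hφ hx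
    refine le_of_forall_pos_le_add fun δ hδ => ?_
    have hε : 0 < δ / (1 + x) := by positivity
    have h := Gtr_Ftr_le_affine (f := f) (a := a + δ / (1 + x)) (b := b + δ / (1 + x)) hx
      (by linarith) (by linarith) hGbdd fun u hu => by
        have := (hfφ u hu).trans (hmaj u hu)
        have := mul_pos hε hu
        linarith
    have hδ' : δ / (1 + x) * (1 + x) = δ := by field_simp
    linarith
  · refine le_csInf ⟨_, 1, one_pos, rfl⟩ ?_
    rintro y ⟨t, ht, rfl⟩
    have hs := mul_pos hx ht
    have hF := Ftr_pos hs (hbd _ hs) hpos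
    refine csInf_le hAbdd ⟨_, inClassA_affine hF.le (div_pos hF hs).le, fun u hu => ?_, ?_⟩
    · refine (le_Ftr_mul hs (hbd _ hs) hu).trans_eq ?_
      ring
    · field_simp
end

section
/- Let f : (0,∞) → ℝ be a nonnegative function of at most linear growth (there is C > 0 with f(t) ≤ C(t+1) for all t > 0). Then G[F[f]](x) = f(x) for every x > 0 if and only if f is concave on (0,∞). -/
/-!
Writing `K(y) = F[f](y) / y = sup_{s>0} f(s) / (s + y)`, the substitution `y = x t` gives
`G[F[f]](x) = inf_{y>0} (x + y) K(y)`. Each term is affine in `x` and majorizes `f`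
(`mul_le_Ftr_mul`), so `G[F[f]]` is concave and `f ≤ G[F[f]]`.

Conversely, let `f` be concave and `x > 0`. A supporting line `s ↦ a + m s` of `f` at `x`
(`exists_supporting_line`) has `m, a ≥ 0` because `f ≥ 0` on the whole half-line. For `ε > 0` the
line `(a + ε) + (m + ε) s` also majorizes `f`; taking `y = (a + ε) / (m + ε)` gives
`K(y) ≤ m + ε`, hence `G[F[f]](x) ≤ (x + y) K(y) ≤ f(x) + ε (1 + x)`.
-/

open Set Filter

lemma bddAbove_FSet {f : ℝ → ℝ} {C : ℝ} (hC : 0 < C)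
    (hlin : ∀ t > (0:ℝ), f t ≤ C * (t + 1)) {x : ℝ} (hx : 0 < x) : BddAbove (FSet f x) := by
  refine ⟨C * (x + 1), ?_⟩
  rintro _ ⟨t, ht, rfl⟩
  rw [div_le_iff₀ (by linarith)]
  have h := hlin (x * t) (mul_pos hx ht)
  nlinarith [mul_pos hC hx, mul_pos hC ht]

/-- The inequality `f(s) ≤ (s + y) F[f](y) / y`, with the denominator cleared. -/
lemma mul_le_Ftr_mul {f : ℝ → ℝ} {C : ℝ} (hC : 0 < C)
    (hlin : ∀ t > (0:ℝ), f t ≤ C * (t + 1)) {s y : ℝ} (hs : 0 < s) (hy : 0 < y) :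
    f s * y ≤ Ftr f y * (s + y) := by
  have h : f (y * (s / y)) / (s / y + 1) ≤ Ftr f y :=
    le_csSup (bddAbove_FSet hC hlin hy) ⟨s / y, div_pos hs hy, rfl⟩
  rw [mul_div_cancel₀ s hy.ne', div_le_iff₀ (by positivity)] at h
  calc f s * y ≤ Ftr f y * (s / y + 1) * y := by gcongr
    _ = Ftr f y * (s + y) := by field_simp

lemma Ftr_le {f : ℝ → ℝ} {y M : ℝ} (hy : 0 < y)
    (h : ∀ s > (0:ℝ), f s * y ≤ M * (s + y)) : Ftr f y ≤ M := by
  refine csSup_le ⟨_, 1, one_pos, rfl⟩ ?_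
  rintro _ ⟨t, ht, rfl⟩
  rw [div_le_iff₀ (by linarith)]
  have := h (y * t) (mul_pos hy ht)
  refine le_of_mul_le_mul_right ?_ hy
  linarith

lemma le_of_mem_GSet {f : ℝ → ℝ} {C : ℝ} (hC : 0 < C)
    (hlin : ∀ t > (0:ℝ), f t ≤ C * (t + 1)) {x z : ℝ} (hx : 0 < x)
    (hz : z ∈ GSet (Ftr f) x) : f x ≤ z := by
  obtain ⟨t, ht, rfl⟩ := hz
  have h := mul_le_Ftr_mul hC hlin hx (mul_pos hx ht)
  refine le_of_mul_le_mul_right ?_ (mul_pos hx ht)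
  calc f x * (x * t) ≤ Ftr f (x * t) * (x + x * t) := h
    _ = Ftr f (x * t) * (1 + 1 / t) * (x * t) := by field_simp; ring

lemma exists_supporting_line {f : ℝ → ℝ} (hf : ConcaveOn ℝ (Ioi (0:ℝ)) f) {x : ℝ} (hx : 0 < x) :
    ∃ m : ℝ, ∀ s > (0:ℝ), f s ≤ f x + m * (s - x) := by
  -- `m` separates the slopes of chords to the right of `x` from those to its left.
  obtain ⟨m, hm₁, hm₂⟩ := exists_between_of_forall_le
    (s := (fun z => (f z - f x) / (z - x)) '' Ioi x)
    (t := (fun w => (f x - f w) / (x - w)) '' Ioo 0 x)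
    ((nonempty_Ioi).image _) ((nonempty_Ioo.2 hx).image _) (by
      rintro _ ⟨z, hz, rfl⟩ _ ⟨w, hw, rfl⟩
      exact hf.slope_anti_adjacent hw.1 (hx.trans hz) hw.2 hz)
  refine ⟨m, fun s hs => ?_⟩
  rcases lt_trichotomy s x with h | rfl | h
  · have := hm₂ ⟨s, ⟨hs, h⟩, rfl⟩
    rw [le_div_iff₀ (by linarith)] at this
    linarith
  · simp
  · have := hm₁ ⟨s, h, rfl⟩
    rw [div_le_iff₀ (by linarith)] at this
    linarith

/-- An affine function that is nonnegative on `(0,∞)` has nonnegative coefficients. -/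
lemma coeff_nonneg {a m : ℝ} (h : ∀ s > (0:ℝ), 0 ≤ a + m * s) : 0 ≤ a ∧ 0 ≤ m := by
  constructor
  · by_contra! ha
    -- The value at the witness is at most `a / 2`.
    have hpos : 0 < -a / (2 * (|m| + 1)) := by
      apply div_pos <;> [linarith; positivity]
    have h1 := h _ hpos
    have h2 : (|m| + 1) * (-a / (2 * (|m| + 1))) = -a / 2 := by field_simp
    nlinarith [le_abs_self m]
  · by_contra! hm
    -- The value at the witness is `a - (|a| + 1)`.
    have h1 := h ((|a| + 1) / (-m)) (div_pos (by positivity) (by linarith))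
    have h2 : m * ((|a| + 1) / (-m)) = -(|a| + 1) := by
      have := hm.ne
      field_simp
    linarith [le_abs_self a]

/-- for a nonnegative function of at most linear growth,
`G[F[f]] = f` iff `f` is concave on (0,∞). -/
theorem stmt_6 (f : ℝ → ℝ) (C : ℝ) (hC : 0 < C)
    (hlin : ∀ t > (0:ℝ), f t ≤ C * (t + 1))
    (hnonneg : ∀ t > (0:ℝ), 0 ≤ f t) :
    (∀ x > (0:ℝ), Gtr (Ftr f) x = f x) ↔ ConcaveOn ℝ (Ioi (0:ℝ)) f := by
  constructor
  · intro h
    refine ⟨convex_Ioi 0, ?_⟩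
    intro u hu v hv a b ha hb hab
    have hw : 0 < a • u + b • v := convex_Ioi (0:ℝ) hu hv ha hb hab
    rw [← h _ hw]
    refine le_csInf ⟨_, 1, one_pos, rfl⟩ ?_
    rintro _ ⟨t, ht, rfl⟩
    simp only [smul_eq_mul] at hw ⊢
    set w := a * u + b * v with hwdef
    have hy : 0 < w * t := mul_pos hw ht
    have h1 := mul_le_mul_of_nonneg_left (mul_le_Ftr_mul hC hlin hu hy) ha
    have h2 := mul_le_mul_of_nonneg_left (mul_le_Ftr_mul hC hlin hv hy) hb
    refine le_of_mul_le_mul_right ?_ hy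
    have h3 : Ftr f (w * t) * (1 + 1 / t) * (w * t) = Ftr f (w * t) * (w + w * t) := by
      field_simp; ring
    have h4 : Ftr f (w * t) * (w + w * t)
        = a * (Ftr f (w * t) * (u + w * t)) + b * (Ftr f (w * t) * (v + w * t)) := by
      have hb' : b = 1 - a := by linarith
      generalize w * t = y
      rw [hwdef, hb']; ring
    rw [h3, h4]
    linarith
  · intro hf x hx
    refine le_antisymm ?_ (le_csInf ⟨_, 1, one_pos, rfl⟩ fun z hz => le_of_mem_GSet hC hlin hx hz)
    obtain ⟨m, hm⟩ := exists_supporting_line hf hx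
    obtain ⟨ha, hm0⟩ := coeff_nonneg (a := f x - m * x) (m := m) fun s hs => by
      linarith [hnonneg s hs, hm s hs]
    suffices key : ∀ ε > (0:ℝ), Gtr (Ftr f) x ≤ f x + ε * (1 + x) by
      refine le_of_forall_pos_le_add fun δ hδ => ?_
      have := key (δ / (1 + x)) (by positivity)
      rwa [div_mul_cancel₀ _ (by positivity)] at this
    intro ε hε
    set A := f x - m * x + ε with hA
    set M := m + ε with hM
    have hA0 : 0 < A := by linarith
    have hM0 : 0 < M := by linarith
    have hy : 0 < A / M := div_pos hA0 hM0
    have hF : Ftr f (A / M) ≤ A := by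
      refine Ftr_le hy fun s hs => ?_
      have h1 : f s ≤ M * s + A := by nlinarith [hm s hs]
      calc f s * (A / M) ≤ (M * s + A) * (A / M) := by gcongr
        _ = A * (s + A / M) := by field_simp
    have hmem : Ftr f (A / M) * (1 + 1 / (A / M / x)) ∈ GSet (Ftr f) x :=
      ⟨A / M / x, by positivity, by rw [mul_div_cancel₀ _ hx.ne']⟩
    calc Gtr (Ftr f) x ≤ Ftr f (A / M) * (1 + 1 / (A / M / x)) :=
          csInf_le ⟨f x, fun z hz => le_of_mem_GSet hC hlin hx hz⟩ hmem
      _ ≤ A * (1 + 1 / (A / M / x)) := by gcongr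
      _ = A + M * x := by field_simp
      _ = f x + ε * (1 + x) := by rw [hA, hM]; ring
end

section
/- Let f : (0,∞) → ℝ be a function of at most linear growth (there is C > 0 with f(t) ≤ C(t+1) for all t > 0) such that F[f] and G[F[f]] are finite everywhere. Then for every x > 0, G[F[f]](x) equals the infimum of values at x of all 'left supporting lines' of f, i.e. G[F[f]](x) = inf{(1 + x/z)·c : z > 0, c ∈ ℝ, and (1 + s/z)·c ≥ f(s) for all s > 0}. -/
/-!
A line through `(-z, 0)` with height `c` at `0` majorizes `f` exactly when `F[f](z) ≤ c`
(`Ftr_le_iff`). So the lowest majorizing line through `(-z, 0)` has value `(1 + x / z) * F[f](z)`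
at `x`, and the infimum over `z = x * t` is `G[F[f]](x)`.
-/

open Set Filter

/-- The number `F[f](z)` is the least `c` for which the line through `(-z, 0)` of height `c` at `0`
majorizes `f`; the parameters are related by `s = z * t`. -/
theorem Ftr_le_iff {f : ℝ → ℝ} {z : ℝ} (hz : 0 < z) (hF : BddAbove (FSet f z)) (c : ℝ) :
    Ftr f z ≤ c ↔ ∀ s > (0:ℝ), f s ≤ (1 + s / z) * c := by
  have hne : (FSet f z).Nonempty := ⟨_, 1, one_pos, rfl⟩
  unfold Ftr
  rw [csSup_le_iff hF hne]
  constructor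
  · intro h s hs
    have ht : 0 < s / z := div_pos hs hz
    have h1 := h _ ⟨s / z, ht, rfl⟩
    rw [mul_div_cancel₀ s hz.ne', div_le_iff₀ (by linarith)] at h1
    linarith
  · rintro h _ ⟨t, ht, rfl⟩
    have h1 := h (z * t) (mul_pos hz ht)
    rw [mul_div_cancel_left₀ t hz.ne'] at h1
    rw [div_le_iff₀ (by linarith)]
    linarith

/-- `G[F[f]](x)` equals the infimum of values at `x` of all left
supporting lines of `f` (lines through points `(-z,0)`, `z > 0`, above the graph). -/
theorem stmt_10 (f : ℝ → ℝ) (C : ℝ) (hC : 0 < C)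
    (hlin : ∀ t > (0:ℝ), f t ≤ C * (t + 1))
    (hFfin : ∀ x > (0:ℝ), BddAbove (FSet f x))
    (hGfin : ∀ x > (0:ℝ), BddBelow (GSet (Ftr f) x)) :
    ∀ x > (0:ℝ), Gtr (Ftr f) x =
      sInf {y : ℝ | ∃ z : ℝ, 0 < z ∧ ∃ c : ℝ,
        (∀ s > (0:ℝ), f s ≤ (1 + s / z) * c) ∧ y = (1 + x / z) * c} := by
  intro x hx
  have key : ∀ t : ℝ, 0 < t → 1 + 1 / t = 1 + x / (x * t) := by
    intro t ht
    have := hx.ne'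
    field_simp
  -- With `c = F[f](z)` and `z = x * t`, every value in the infimum `G` comes from a majorizing line.
  have hsub : GSet (Ftr f) x ⊆ {y : ℝ | ∃ z : ℝ, 0 < z ∧ ∃ c : ℝ,
        (∀ s > (0:ℝ), f s ≤ (1 + s / z) * c) ∧ y = (1 + x / z) * c} := by
    rintro _ ⟨t, ht, rfl⟩
    have hz : 0 < x * t := mul_pos hx ht
    refine ⟨x * t, hz, Ftr f (x * t), (Ftr_le_iff hz (hFfin _ hz) _).1 le_rfl, ?_⟩
    rw [key t ht, mul_comm]
  -- Conversely, lowering `c` to `F[f](z)` lowers the value of the line at `x`.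
  have hdom : ∀ y ∈ {y : ℝ | ∃ z : ℝ, 0 < z ∧ ∃ c : ℝ,
        (∀ s > (0:ℝ), f s ≤ (1 + s / z) * c) ∧ y = (1 + x / z) * c},
      Gtr (Ftr f) x ≤ y := by
    rintro _ ⟨z, hz, c, hc, rfl⟩
    have hcF := (Ftr_le_iff hz (hFfin z hz) c).2 hc
    have hxz : 0 < x / z := div_pos hx hz
    have ht : 0 < z / x := div_pos hz hx
    have hmem : (1 + x / z) * Ftr f z ∈ GSet (Ftr f) x := by
      refine ⟨z / x, ht, ?_⟩
      rw [key _ ht, mul_div_cancel₀ z hx.ne', mul_comm]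
    exact (csInf_le (hGfin x hx) hmem).trans
      (mul_le_mul_of_nonneg_left hcF (by linarith))
  have hne : (GSet (Ftr f) x).Nonempty := ⟨_, 1, one_pos, rfl⟩
  exact le_antisymm (le_csInf (hne.mono hsub) hdom) (csInf_le_csInf ⟨_, hdom⟩ hne hsub)
end

section
/- Let V be a real vector space, T ⊆ V a convex cone containing 0, and α, β, γ : V → ℝ linear maps that are nonnegative on T, with α(t) > 0 for every t ∈ T with t ≠ 0. Define f(x) = sup{γ(t) : t ∈ T, α(t) ≤ 1, β(t) ≤ x} for x ≥ 0 and g(x) = sup{γ(t) : t ∈ T, α(t) + β(t)/x ≤ 1} for x > 0, and assume f(x) < ∞ for all x ≥ 0. Then g = F[f], i.e. for every x > 0, g(x) = sup_{t>0} f(xt)/(1+t). -/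
/-!
Both inequalities come from rescaling cone elements. If `α u ≤ 1` and `β u ≤ x s`, then
`u / (1 + s)` is feasible for `g x`, so `f (x s) / (1 + s) ≤ g x`. Conversely, let `α t + β t / x ≤ 1`.
For `ε > 0` put `c = α t + ε` and `s = (β t / x + ε) / c`; then `t / c` is feasible for `f (x s)`, and
`c (1 + s) = α t + β t / x + 2 ε`, so `γ t ≤ F[f](x) (1 + 2 ε)`, and `ε → 0` finishes. The perturbation
by `ε` keeps `c` and `s` positive, which covers the cases `t = 0` and `β t = 0`.
-/

open Set Filter

variable {V : Type*} [AddCommGroup V] [Module ℝ V]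

/-- `T` is a convex cone containing `0`: closed under addition and nonnegative scaling. -/
def IsConvexCone (T : Set V) : Prop :=
  (0:V) ∈ T ∧ (∀ a ∈ T, ∀ b ∈ T, a + b ∈ T) ∧ ∀ c : ℝ, 0 ≤ c → ∀ t ∈ T, c • t ∈ T

/-- The set `{γ(t) : t ∈ T, α(t) ≤ 1, β(t) ≤ x}`. -/
def fconeSet (T : Set V) (α β γ : V →ₗ[ℝ] ℝ) (x : ℝ) : Set ℝ :=
  {y : ℝ | ∃ t ∈ T, α t ≤ 1 ∧ β t ≤ x ∧ y = γ t}

/-- `f(x) = sup{γ(t) : t ∈ T, α(t) ≤ 1, β(t) ≤ x}`. -/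
noncomputable def fcone (T : Set V) (α β γ : V →ₗ[ℝ] ℝ) (x : ℝ) : ℝ :=
  sSup (fconeSet T α β γ x)

/-- `g(x) = sup{γ(t) : t ∈ T, α(t) + β(t)/x ≤ 1}`. -/
noncomputable def gcone (T : Set V) (α β γ : V →ₗ[ℝ] ℝ) (x : ℝ) : ℝ :=
  sSup {y : ℝ | ∃ t ∈ T, α t + β t / x ≤ 1 ∧ y = γ t}

/-- `g = F[f]`. -/
theorem stmt_11 (T : Set V) (hT : IsConvexCone T) (α β γ : V →ₗ[ℝ] ℝ)
    (hα : ∀ t ∈ T, 0 ≤ α t) (hβ : ∀ t ∈ T, 0 ≤ β t) (hγ : ∀ t ∈ T, 0 ≤ γ t)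
    (hαpos : ∀ t ∈ T, t ≠ 0 → 0 < α t)
    (hfin : ∀ x : ℝ, 0 ≤ x → BddAbove (fconeSet T α β γ x)) :
    ∀ x > (0:ℝ), gcone T α β γ x = Ftr (fcone T α β γ) x := by
  intro x hx
  obtain ⟨h0, -, hsmul⟩ := hT
  have hgb : BddAbove {y : ℝ | ∃ t ∈ T, α t + β t / x ≤ 1 ∧ y = γ t} := by
    refine (hfin x hx.le).mono ?_
    rintro y ⟨t, ht, h, rfl⟩
    have h1 := hα t ht
    have h2 : 0 ≤ β t / x := div_nonneg (hβ t ht) hx.le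
    exact ⟨t, ht, by linarith, by simpa using (div_le_iff₀ hx).1 (by linarith : β t / x ≤ 1), rfl⟩
  have hFg : ∀ y ∈ FSet (fcone T α β γ) x, y ≤ gcone T α β γ x := by
    rintro y ⟨s, hs, rfl⟩
    have hs1 : 0 < s + 1 := by linarith
    rw [div_le_iff₀ hs1]
    refine csSup_le ⟨γ 0, 0, h0, by simp, by simpa using (mul_pos hx hs).le, rfl⟩ ?_
    rintro z ⟨u, hu, hu1, hu2, rfl⟩
    have hle : γ ((s + 1)⁻¹ • u) ≤ gcone T α β γ x := by
      refine le_csSup hgb ⟨_, hsmul _ (inv_pos.2 hs1).le u hu, ?_, rfl⟩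
      have hb : β u / x ≤ s := by rw [div_le_iff₀ hx]; linarith
      have : α ((s + 1)⁻¹ • u) + β ((s + 1)⁻¹ • u) / x = (α u + β u / x) / (s + 1) := by
        simp only [map_smul, smul_eq_mul]
        field_simp
      rw [this, div_le_one hs1]
      linarith
    rw [map_smul, smul_eq_mul, inv_mul_le_iff₀ hs1] at hle
    linarith
  have hFb : BddAbove (FSet (fcone T α β γ) x) := ⟨_, hFg⟩
  apply le_antisymm
  · refine csSup_le ⟨γ 0, 0, h0, by simp, rfl⟩ ?_
    rintro y ⟨t, ht, h, rfl⟩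
    have hat := hα t ht
    have hbt : 0 ≤ β t / x := div_nonneg (hβ t ht) hx.le
    have key : ∀ ε : ℝ, 0 < ε → γ t ≤ Ftr (fcone T α β γ) x * (α t + β t / x + 2 * ε) := by
      intro ε hε
      have hc : 0 < α t + ε := by linarith
      have hs : 0 < (β t / x + ε) / (α t + ε) := by positivity
      have h1 : (α t + ε)⁻¹ * γ t ≤ fcone T α β γ (x * ((β t / x + ε) / (α t + ε))) := by
        refine le_csSup (hfin _ (by positivity))
          ⟨(α t + ε)⁻¹ • t, hsmul _ (inv_pos.2 hc).le t ht, ?_, ?_, by simp⟩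
        · rw [map_smul, smul_eq_mul, inv_mul_le_iff₀ hc]
          linarith
        · rw [map_smul, smul_eq_mul, inv_mul_le_iff₀ hc]
          have : (α t + ε) * (x * ((β t / x + ε) / (α t + ε))) = β t + x * ε := by
            field_simp
          rw [this]
          nlinarith
      have h2 : fcone T α β γ (x * ((β t / x + ε) / (α t + ε))) / ((β t / x + ε) / (α t + ε) + 1)
          ≤ Ftr (fcone T α β γ) x := le_csSup hFb ⟨_, hs, rfl⟩
      rw [div_le_iff₀ (by linarith)] at h2
      have h3 := h1.trans h2
      rw [inv_mul_le_iff₀ hc] at h3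
      have h4 : (α t + ε) * ((β t / x + ε) / (α t + ε) + 1) = α t + β t / x + 2 * ε := by
        rw [mul_add, mul_div_cancel₀ _ hc.ne']
        ring
      rwa [mul_left_comm, h4] at h3
    have hF : 0 ≤ Ftr (fcone T α β γ) x := by
      have := (hγ t ht).trans (key 1 one_pos)
      exact nonneg_of_mul_nonneg_left this (by linarith)
    have hlim : Tendsto (fun ε : ℝ => Ftr (fcone T α β γ) x * (α t + β t / x + 2 * ε))
        (nhdsWithin 0 (Ioi 0)) (nhds (Ftr (fcone T α β γ) x * (α t + β t / x + 2 * 0))) :=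
      (Continuous.tendsto (by fun_prop) 0).mono_left nhdsWithin_le_nhds
    have := ge_of_tendsto hlim (eventually_mem_nhdsWithin.mono fun ε hε => key ε hε)
    nlinarith
  · exact csSup_le ⟨_, 1, one_pos, rfl⟩ hFg
end

section
/- Let V be a real vector space, T ⊆ V a convex cone containing 0, and α, β, γ : V → ℝ linear maps that are nonnegative on T, with α(t) > 0 for every t ∈ T with t ≠ 0. Define f(x) = sup{γ(t) : t ∈ T, α(t) ≤ 1, β(t) ≤ x} for x ≥ 0 and g(x) = sup{γ(t) : t ∈ T, α(t) + β(t)/x ≤ 1} for x > 0, and assume f(x) < ∞ for all x ≥ 0. Then f = G[g], i.e. for every x > 0, f(x) = inf_{t>0} g(xt)(1 + 1/t). -/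
/-!
The identity is Lagrangian duality for `f(x) = sup {γ t : t ∈ T, α t ≤ 1, β t ≤ x}`.

`f ≤ G[g]`: if `t` is feasible for `f(x)`, then `(τ / (1 + τ)) • t` is feasible for `g(xτ)`.

`G[g] ≤ f`: there are multipliers `a, c ≥ 0` with `γ ≤ a α + c β` on `T` and `a + c x = f(x)`
(`exists_multipliers`; this is a supporting line of the concave function `f` at `x`). Increasing
both slightly to `a', c' > 0` gives `g(a'/c') ≤ a'`, and `τ = a' / (c' x)` yields
`g(xτ)(1 + 1/τ) ≤ a' + c' x`, which is as close to `f(x)` as desired.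
-/

open Set Filter

variable {V : Type*} [AddCommGroup V] [Module ℝ V]

/-- Homogeneous form of the definition of `f(x)`: the constraints may be rescaled by `m ≥ 0`.
For `m = 0` the positivity of `α` forces `t = 0`. -/
lemma gamma_le_fcone_mul (T : Set V) (hT : IsConvexCone T) (α β γ : V →ₗ[ℝ] ℝ)
    (hαpos : ∀ t ∈ T, t ≠ 0 → 0 < α t) {x : ℝ}
    (hb : BddAbove (fconeSet T α β γ x)) {t : V} (ht : t ∈ T) {m : ℝ} (hm : 0 ≤ m)
    (h1 : α t ≤ m) (h2 : β t ≤ x * m) : γ t ≤ fcone T α β γ x * m := by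
  rcases hm.eq_or_lt with rfl | hm
  · have : t = 0 := by
      by_contra h
      linarith [hαpos t ht h]
    simp [this]
  · have h : γ (m⁻¹ • t) ≤ fcone T α β γ x := by
      refine le_csSup hb ⟨m⁻¹ • t, hT.2.2 _ (by positivity) t ht, ?_, ?_, rfl⟩
      · rw [map_smul, smul_eq_mul, inv_mul_le_iff₀ hm]; linarith
      · rw [map_smul, smul_eq_mul, inv_mul_le_iff₀ hm]; linarith
    rw [map_smul, smul_eq_mul, inv_mul_le_iff₀ hm] at h
    linarith

/-- Lagrange multipliers for the program defining `f(x)`. -/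
lemma exists_multipliers (T : Set V) (hT : IsConvexCone T) (α β γ : V →ₗ[ℝ] ℝ)
    (hα : ∀ t ∈ T, 0 ≤ α t) (hβ : ∀ t ∈ T, 0 ≤ β t)
    (hαpos : ∀ t ∈ T, t ≠ 0 → 0 < α t) {x : ℝ} (hx : 0 < x)
    (hb : BddAbove (fconeSet T α β γ x)) :
    ∃ a c : ℝ, 0 ≤ a ∧ 0 ≤ c ∧ a + c * x = fcone T α β γ x ∧
      ∀ t ∈ T, γ t ≤ a * α t + c * β t := by
  have key := fun (t : V) (ht : t ∈ T) (m : ℝ) =>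
    gamma_le_fcone_mul T hT α β γ hαpos hb ht (m := m)
  have hf0 : 0 ≤ fcone T α β γ x := by
    simpa using key 0 hT.1 1 zero_le_one (by simp) (by simpa using hx.le)
  set F := fcone T α β γ x
  -- With `a = F - c * x`, each `t` with `β t > x * α t` bounds `c` below, and each `t` with
  -- `β t < x * α t` bounds it above; `0 ≤ c` and `0 ≤ a` add the bounds `0` and `F / x`.
  obtain ⟨c, hcL, hcU⟩ := exists_between_of_forall_le
    (s := insert 0 {c : ℝ | ∃ t ∈ T, x * α t < β t ∧ c = (γ t - F * α t) / (β t - x * α t)})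
    (t := insert (F / x)
      {c : ℝ | ∃ t ∈ T, β t < x * α t ∧ c = (F * α t - γ t) / (x * α t - β t)})
    (insert_nonempty _ _) (insert_nonempty _ _) (by
      rintro _ (rfl | ⟨t, ht, h, rfl⟩) _ (rfl | ⟨u, hu, h', rfl⟩)
      · positivity
      · have := key u hu _ (hα u hu) le_rfl h'.le
        exact div_nonneg (by linarith) (by linarith)
      · have hm : x * (β t / x) = β t := by field_simp
        have := key t ht (β t / x) (div_nonneg (hβ t ht) hx.le)
          (by rw [le_div_iff₀ hx]; linarith) hm.ge
        rw [← mul_div_assoc, le_div_iff₀ hx] at this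
        rw [div_le_div_iff₀ (by linarith) hx]
        linarith
      · -- The combination of `t` and `u` below satisfies `β = x * α`.
        have hp : 0 ≤ β t - x * α t := by linarith
        have hq : 0 ≤ x * α u - β u := by linarith
        have hmem := hT.2.1 _ (hT.2.2 _ hq t ht) _ (hT.2.2 _ hp u hu)
        have := key _ hmem _ (hα _ hmem) le_rfl
          (by simp only [map_add, map_smul, smul_eq_mul]; linarith)
        simp only [map_add, map_smul, smul_eq_mul] at this
        rw [div_le_div_iff₀ (by linarith) (by linarith)]
        linarith)
  have hc0 : 0 ≤ c := hcL (mem_insert _ _)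
  have hcF : c ≤ F / x := hcU (mem_insert _ _)
  rw [le_div_iff₀ hx] at hcF
  refine ⟨F - c * x, c, by linarith, hc0, by ring, fun t ht => ?_⟩
  rcases lt_trichotomy (β t) (x * α t) with h | h | h
  · have := hcU (mem_insert_of_mem _ ⟨t, ht, h, rfl⟩)
    rw [le_div_iff₀ (by linarith)] at this
    linarith
  · have := key t ht _ (hα t ht) le_rfl h.le
    rw [h]
    linarith
  · have := hcL (mem_insert_of_mem _ ⟨t, ht, h, rfl⟩)
    rw [div_le_iff₀ (by linarith)] at this
    linarith

/-- `f = G[g]`. -/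
theorem stmt_12 (T : Set V) (hT : IsConvexCone T) (α β γ : V →ₗ[ℝ] ℝ)
    (hα : ∀ t ∈ T, 0 ≤ α t) (hβ : ∀ t ∈ T, 0 ≤ β t) (hγ : ∀ t ∈ T, 0 ≤ γ t)
    (hαpos : ∀ t ∈ T, t ≠ 0 → 0 < α t)
    (hfin : ∀ x : ℝ, 0 ≤ x → BddAbove (fconeSet T α β γ x)) :
    ∀ x > (0:ℝ), fcone T α β γ x = Gtr (gcone T α β γ) x := by
  intro x hx
  have h0 : (0 : V) ∈ T := hT.1
  have hle : ∀ y ∈ GSet (gcone T α β γ) x, fcone T α β γ x ≤ y := by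
    rintro _ ⟨τ, hτ, rfl⟩
    refine csSup_le ⟨0, 0, h0, by simp, by simpa using hx.le, by simp⟩ ?_
    rintro _ ⟨t, ht, h1, h2, rfl⟩
    have hxτ : 0 < x * τ := by positivity
    -- The feasible set of `g` at `x * τ` is contained in that of `f`, hence bounded.
    have hbd : BddAbove {y : ℝ | ∃ t ∈ T, α t + β t / (x * τ) ≤ 1 ∧ y = γ t} := by
      refine (hfin (x * τ) hxτ.le).mono ?_
      rintro _ ⟨u, hu, h, rfl⟩
      have hd : 0 ≤ β u / (x * τ) := div_nonneg (hβ u hu) hxτ.le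
      have hd' : β u / (x * τ) ≤ 1 := by linarith [hα u hu]
      rw [div_le_one hxτ] at hd'
      exact ⟨u, hu, by linarith, hd', rfl⟩
    have hg : γ ((τ / (1 + τ)) • t) ≤ gcone T α β γ (x * τ) := by
      refine le_csSup hbd ⟨_, hT.2.2 _ (by positivity) t ht, ?_, rfl⟩
      simp only [map_smul, smul_eq_mul]
      calc τ / (1 + τ) * α t + τ / (1 + τ) * β t / (x * τ)
          ≤ τ / (1 + τ) * 1 + τ / (1 + τ) * x / (x * τ) := by gcongr
        _ = 1 := by field_simp; ring
    rw [map_smul, smul_eq_mul] at hg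
    calc γ t = τ / (1 + τ) * γ t * (1 + 1 / τ) := by field_simp; ring
      _ ≤ _ := by gcongr
  refine le_antisymm (le_csInf ⟨_, 1, one_pos, rfl⟩ hle) ?_
  obtain ⟨a, c, ha, hc, hac, hγle⟩ :=
    exists_multipliers T hT α β γ hα hβ hαpos hx (hfin x hx.le)
  refine le_of_forall_pos_le_add fun ε hε => ?_
  -- Both perturbed multipliers are positive, and `a' + c' * x = f(x) + ε`.
  obtain ⟨a', ha'⟩ : ∃ a', a' = a + ε / 2 := ⟨_, rfl⟩
  obtain ⟨c', hc'⟩ : ∃ c', c' = c + ε / (2 * x) := ⟨_, rfl⟩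
  have ha0 : 0 < a' := by rw [ha']; positivity
  have hc0 : 0 < c' := by rw [hc']; positivity
  have hcc : c ≤ c' := by rw [hc']; linarith [show 0 < ε / (2 * x) by positivity]
  have hsum : a' + c' * x = fcone T α β γ x + ε := by
    rw [← hac, ha', hc']; field_simp; ring
  have hxs : x * (a' / (c' * x)) = a' / c' := by field_simp
  have hg : gcone T α β γ (a' / c') ≤ a' := by
    refine csSup_le ⟨0, 0, h0, by simp, by simp⟩ ?_
    rintro _ ⟨t, ht, h, rfl⟩
    calc γ t ≤ a * α t + c * β t := hγle t ht
      _ ≤ a' * α t + c' * β t := by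
        have := hα t ht
        have := hβ t ht
        gcongr
        linarith
      _ = a' * (α t + β t / (a' / c')) := by field_simp
      _ ≤ a' * 1 := by gcongr
      _ = a' := mul_one _
  calc Gtr (gcone T α β γ) x
      ≤ gcone T α β γ (x * (a' / (c' * x))) * (1 + 1 / (a' / (c' * x))) :=
        csInf_le ⟨_, hle⟩ ⟨a' / (c' * x), by positivity, rfl⟩
    _ ≤ a' * (1 + 1 / (a' / (c' * x))) := by rw [hxs]; gcongr
    _ = a' + c' * x := by field_simp
    _ = _ := hsum
end

section
/- Let V be a real vector space, T ⊆ V a convex cone containing 0, and α, β, γ : V → ℝ linear maps that are nonnegative on T, with α(t) > 0 for every t ∈ T with t ≠ 0. Define f(x) = sup{γ(t) : t ∈ T, α(t) ≤ 1, β(t) ≤ x} for x ≥ 0 and g(x) = sup{γ(t) : t ∈ T, α(t) + β(t)/x ≤ 1} for x > 0, and assume f(x) < ∞ for all x ≥ 0. Then for every x > 0 and every r ∈ (0,1], g(x) ≥ r·f(x(1−r)/r). -/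
/-!
Scaling by `r` maps the feasible set of `f(x(1-r)/r)` into that of `g(x)`: if `α t ≤ 1` and
`β t ≤ x(1-r)/r`, then `α (r • t) + β (r • t) / x ≤ r + (1 - r) = 1`, while `γ (r • t) = r * γ t`.
Taking suprema gives the inequality. The supremum `g(x)` is finite since its feasible set is
contained in that of `f(x)`.
-/

open Set Filter

variable {V : Type*} [AddCommGroup V] [Module ℝ V]

/-- for every `x > 0` and `r ∈ (0,1]`, `g(x) ≥ r·f(x(1-r)/r)`. -/
theorem stmt_14 (T : Set V) (hT : IsConvexCone T) (α β γ : V →ₗ[ℝ] ℝ)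
    (hα : ∀ t ∈ T, 0 ≤ α t) (hβ : ∀ t ∈ T, 0 ≤ β t) (hγ : ∀ t ∈ T, 0 ≤ γ t)
    (hαpos : ∀ t ∈ T, t ≠ 0 → 0 < α t)
    (hfin : ∀ x : ℝ, 0 ≤ x → BddAbove (fconeSet T α β γ x)) :
    ∀ x > (0:ℝ), ∀ r : ℝ, 0 < r → r ≤ 1 →
      r * fcone T α β γ (x * (1 - r) / r) ≤ gcone T α β γ x := by
  intro x hx r hr hr1
  obtain ⟨h0, -, hsmul⟩ := hT
  -- The constraint for `g(x)` forces `α t ≤ 1` and `β t ≤ x`, so `g(x)` is bounded by `f(x)`.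
  have hbdd : BddAbove {y : ℝ | ∃ t ∈ T, α t + β t / x ≤ 1 ∧ y = γ t} := by
    refine (hfin x hx.le).mono ?_
    rintro y ⟨t, ht, h, rfl⟩
    have h1 := hα t ht
    have h2 : 0 ≤ β t / x := div_nonneg (hβ t ht) hx.le
    refine ⟨t, ht, by linarith, ?_, rfl⟩
    have h3 : β t / x ≤ 1 := by linarith
    rwa [div_le_one hx] at h3
  have hne : (fconeSet T α β γ (x * (1 - r) / r)).Nonempty :=
    ⟨γ 0, 0, h0, by simp, by
      rw [map_zero]
      exact div_nonneg (mul_nonneg hx.le (sub_nonneg.2 hr1)) hr.le, rfl⟩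
  rw [mul_comm, ← le_div_iff₀ hr]
  refine csSup_le hne ?_
  rintro y ⟨t, ht, h1, h2, rfl⟩
  rw [le_div_iff₀ hr]
  -- If `t` is feasible for `f(x(1-r)/r)`, then `r • t` is feasible for `g(x)`.
  refine le_csSup hbdd ⟨r • t, hsmul r hr.le t ht, ?_, by simp [mul_comm]⟩
  rw [le_div_iff₀ hr] at h2
  have h3 : r * β t / x ≤ 1 - r := by
    rw [div_le_iff₀ hx]
    linarith
  have h4 : r * α t ≤ r := mul_le_of_le_one_right hr.le h1
  simp only [map_smul, smul_eq_mul]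
  linarith
end

section
/- Let V be a real vector space, T ⊆ V a convex cone containing 0, and α, β, γ : V → ℝ linear maps that are nonnegative on T, with α(t) > 0 for every t ∈ T with t ≠ 0. Define f(x) = sup{γ(t) : t ∈ T, α(t) ≤ 1, β(t) ≤ x} for x ≥ 0 and g(x) = sup{γ(t) : t ∈ T, α(t) + β(t)/x ≤ 1} for x > 0, and assume f(x) < ∞ for all x ≥ 0. Then for every x > 0, g(x) ≤ sup{r·f(x(1−r)/r) : r ∈ (0,1]}. -/
/-!
A nonzero competitor `t` for `g x` is normalised by `r = α t ∈ (0, 1]`: the vector `r⁻¹ • t` has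
`α = 1` and `β ≤ x (1 - r) / r`, so `γ t ≤ r * f (x (1 - r) / r)`. As `sSup` of an unbounded set of
reals is `0`, the right-hand set must also be shown bounded above; `f x` is an upper bound, because
`r` times a competitor for `f (x (1 - r) / r)` is a competitor for `f x`.
-/

open Set Filter

variable {V : Type*} [AddCommGroup V] [Module ℝ V]

/-- for every `x > 0`, `g(x) ≤ sup{r·f(x(1-r)/r) : r ∈ (0,1]}`. -/
theorem stmt_15 (T : Set V) (hT : IsConvexCone T) (α β γ : V →ₗ[ℝ] ℝ)
    (hα : ∀ t ∈ T, 0 ≤ α t) (hβ : ∀ t ∈ T, 0 ≤ β t) (hγ : ∀ t ∈ T, 0 ≤ γ t)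
    (hαpos : ∀ t ∈ T, t ≠ 0 → 0 < α t)
    (hfin : ∀ x : ℝ, 0 ≤ x → BddAbove (fconeSet T α β γ x)) :
    ∀ x > (0:ℝ), gcone T α β γ x ≤
      sSup {y : ℝ | ∃ r : ℝ, 0 < r ∧ r ≤ 1 ∧ y = r * fcone T α β γ (x * (1 - r) / r)} := by
  intro x hx
  obtain ⟨h0, -, hsmul⟩ := hT
  have hnonneg : ∀ r : ℝ, 0 < r → r ≤ 1 → 0 ≤ x * (1 - r) / r := fun r hr hr1 =>
    div_nonneg (mul_nonneg hx.le (by linarith)) hr.le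
  -- Scaling a competitor for `f (x * (1 - r) / r)` by `r` gives a competitor for `f x`.
  have hbdd : BddAbove {y : ℝ | ∃ r : ℝ, 0 < r ∧ r ≤ 1 ∧
      y = r * fcone T α β γ (x * (1 - r) / r)} := by
    refine ⟨fcone T α β γ x, ?_⟩
    rintro y ⟨r, hr, hr1, rfl⟩
    rw [← le_div_iff₀' hr]
    refine csSup_le ⟨0, 0, h0, by simp, by simpa using hnonneg r hr hr1, by simp⟩ ?_
    rintro z ⟨t, ht, hαt, hβt, rfl⟩
    rw [le_div_iff₀' hr]
    refine le_csSup (hfin x hx.le) ⟨r • t, hsmul r hr.le t ht, ?_, ?_, by simp⟩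
    · simp only [map_smul, smul_eq_mul]
      nlinarith
    · rw [le_div_iff₀' hr] at hβt
      simp only [map_smul, smul_eq_mul]
      nlinarith
  refine csSup_le ⟨0, 0, h0, by simp, by simp⟩ ?_
  rintro y ⟨t, ht, hle, rfl⟩
  by_cases htz : t = 0
  · subst htz
    refine le_csSup_of_le hbdd ⟨1, one_pos, le_rfl, rfl⟩ ?_
    rw [map_zero, one_mul]
    exact le_csSup (hfin _ (hnonneg 1 one_pos le_rfl)) ⟨0, h0, by simp, by simp, by simp⟩
  · have hr := hαpos t ht htz
    have hr1 : α t ≤ 1 := by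
      have := div_nonneg (hβ t ht) hx.le
      linarith
    have hβt : β t ≤ x * (1 - α t) := by
      rw [← div_le_iff₀' hx]
      linarith
    refine le_csSup_of_le hbdd ⟨α t, hr, hr1, rfl⟩ ?_
    rw [← div_le_iff₀' hr]
    refine le_csSup (hfin _ (hnonneg _ hr hr1))
      ⟨(α t)⁻¹ • t, hsmul _ (inv_nonneg.2 hr.le) t ht, ?_, ?_, ?_⟩
    · simp [hr.ne']
    · rw [map_smul, smul_eq_mul, inv_mul_eq_div]
      gcongr
    · rw [map_smul, smul_eq_mul, inv_mul_eq_div]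
end

section
/- Let H be a finite-dimensional complex inner product space, let G be a positive semidefinite selfadjoint linear operator on H whose lowest eigenvalue is 0, and let A be a linear operator on H. For E > 0 define f_A(E) = sup{‖Aφ‖² : φ ∈ H, ‖φ‖ ≤ 1, ⟨φ, Gφ⟩ ≤ E} and g_A(E) = sup{‖Aφ‖² : φ ∈ H, ‖φ‖² + ⟨φ, Gφ⟩/E ≤ 1}. Then g_A = F[f_A] and f_A = G[g_A], i.e. for every E > 0, g_A(E) = sup_{t>0} f_A(Et)/(1+t) and f_A(E) = inf_{t>0} g_A(Et)(1 + 1/t). -/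
/-!
The identity `g = F[f]` is a rescaling: `φ ↦ √(t + 1) • φ` turns vectors admissible for `gA` at
`E` into vectors admissible for `fA` at `E * t` for a suitable `t`, and its inverse goes back
(`gA_eq_Ftr`).

For `f = G[g]` the key point is that `fA` is concave on `(0, ∞)` (`concaveOn_fA`). Since `fA` is a
supremum over vectors rather than over density matrices, this is the Toeplitz–Hausdorff theorem:
the joint range of the three forms `‖φ‖²`, `⟪φ, G φ⟫`, `‖A φ‖²` is a convex cone
(`exists_joint_add`). To prove it, subtract multiples of the identity so that two of the forms
become traceless on a given pair of vectors; an intermediate value argument and a choice of phase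
then give a unitarily equivalent pair on which both vanish (`exists_common_isotropic`).

A supporting line `f x ≤ a + b x` at `E` has `a, b ≥ 0` because `f` is nonnegative and monotone.
Hence `g (E t) = F[f] (E t) ≤ max a (b E t)`, and balancing `b E t = a` gives
`g (E t) (1 + 1 / t) ≤ a + b E = f E`, up to making `a, b` slightly larger so that they are
positive. The reverse bound is the term `s = 1 / t` of the supremum defining `g (E t)`.
-/

open Set Filter
open scoped InnerProductSpace

variable {H : Type*} [NormedAddCommGroup H] [InnerProductSpace ℂ H]

/-- The energy-constrained squared norm `f_A(E) = [‖A‖^G_E]²`. -/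
noncomputable def fA (G A : H →L[ℂ] H) (E : ℝ) : ℝ :=
  sSup {y : ℝ | ∃ φ : H, ‖φ‖ ≤ 1 ∧ (⟪φ, G φ⟫_ℂ).re ≤ E ∧ y = ‖A φ‖ ^ 2}

/-- The squared norm `g_A(E) = [|||A|||^G_E]²` of `A` viewed as an operator from
`H` with the inner product `⟪·,·⟫ + ⟪·,G·⟫/E` to `H`. -/
noncomputable def gA (G A : H →L[ℂ] H) (E : ℝ) : ℝ :=
  sSup {y : ℝ | ∃ φ : H, ‖φ‖ ^ 2 + (⟪φ, G φ⟫_ℂ).re / E ≤ 1 ∧ y = ‖A φ‖ ^ 2}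

/-! ### Joint range of quadratic forms -/

/-- The real quadratic form `φ ↦ Re ⟪φ, T φ⟫` of an operator `T`; it only sees the selfadjoint
part of `T`, so no symmetry of `T` is required. -/
noncomputable def quadForm (T : H →L[ℂ] H) (φ : H) : ℝ := (⟪φ, T φ⟫_ℂ).re

lemma quadForm_smul (T : H →L[ℂ] H) (c : ℂ) (φ : H) :
    quadForm T (c • φ) = ‖c‖ ^ 2 * quadForm T φ := by
  have h : ⟪c • φ, T (c • φ)⟫_ℂ = ((‖c‖ ^ 2 : ℝ) : ℂ) * ⟪φ, T φ⟫_ℂ := by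
    rw [map_smul, inner_smul_left, inner_smul_right, ← mul_assoc, Complex.conj_mul']
    push_cast
    rfl
  rw [quadForm, h, Complex.re_ofReal_mul, quadForm]

lemma quadForm_real_comb (T : H →L[ℂ] H) (a b : ℝ) (u v : H) :
    quadForm T ((a : ℂ) • u + (b : ℂ) • v) =
      a ^ 2 * quadForm T u + b ^ 2 * quadForm T v
        + a * b * ((⟪u, T v⟫_ℂ).re + (⟪v, T u⟫_ℂ).re) := by
  simp only [quadForm, map_add, map_smul, inner_add_left, inner_add_right, inner_smul_left,
    inner_smul_right, Complex.conj_ofReal, Complex.add_re, Complex.re_ofReal_mul]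
  ring

lemma continuous_quadForm (T : H →L[ℂ] H) : Continuous (quadForm T) := by
  unfold quadForm
  fun_prop

/-- A form that is traceless on the pair `u, v` vanishes somewhere on the quarter circle from `u`
to `v`, where it runs from `q u` to `-q u`. -/
lemma exists_rotation (T : H →L[ℂ] H) (u v : H) (h : quadForm T u + quadForm T v = 0) :
    ∃ c s : ℝ, c ^ 2 + s ^ 2 = 1 ∧ quadForm T ((c : ℂ) • u + (s : ℂ) • v) = 0 := by
  let r : ℝ → ℝ := fun θ =>
    quadForm T (((Real.cos θ : ℝ) : ℂ) • u + ((Real.sin θ : ℝ) : ℂ) • v)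
  have hr : Continuous r := by
    have := continuous_quadForm T
    fun_prop
  have h0 : r 0 = quadForm T u := by simp [r]
  have h1 : r (Real.pi / 2) = quadForm T v := by simp [r]
  have hmem : (0 : ℝ) ∈ uIcc (r 0) (r (Real.pi / 2)) := by
    rw [h0, h1, mem_uIcc]
    rcases le_total (quadForm T u) 0 with h' | h'
    · left; constructor <;> linarith
    · right; constructor <;> linarith
  obtain ⟨θ, -, hθ⟩ := intermediate_value_uIcc hr.continuousOn hmem
  exact ⟨Real.cos θ, Real.sin θ, Real.cos_sq_add_sin_sq θ, hθ⟩

/-- Rotating a pair of vectors preserves the sum of the values of every quadratic form. -/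
lemma quadForm_rotate_add (T : H →L[ℂ] H) (u v : H) {c s : ℝ} (h : c ^ 2 + s ^ 2 = 1) :
    quadForm T ((c : ℂ) • u + (s : ℂ) • v) + quadForm T (((-s : ℝ) : ℂ) • u + (c : ℂ) • v) =
      quadForm T u + quadForm T v := by
  rw [quadForm_real_comb, quadForm_real_comb]
  linear_combination (quadForm T u + quadForm T v) * h

/-- A unimodular factor on `v` kills the cross term of a given form. -/
lemma exists_phase (T : H →L[ℂ] H) (u v : H) :
    ∃ ω : ℂ, ‖ω‖ = 1 ∧ (⟪u, T (ω • v)⟫_ℂ).re + (⟪ω • v, T u⟫_ℂ).re = 0 := by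
  let w : ℂ := ⟪u, T v⟫_ℂ + starRingEnd ℂ ⟪v, T u⟫_ℂ
  have key : ∀ ω : ℂ, (⟪u, T (ω • v)⟫_ℂ).re + (⟪ω • v, T u⟫_ℂ).re = (ω * w).re := by
    intro ω
    simp only [w, map_smul, inner_smul_left, inner_smul_right, Complex.mul_re, Complex.add_re,
      Complex.add_im, Complex.conj_re, Complex.conj_im]
    ring
  by_cases hw : w = 0
  · exact ⟨1, by simp, by rw [key, hw]; simp⟩
  · have hn : ‖w‖ ≠ 0 := norm_ne_zero_iff.mpr hw
    refine ⟨Complex.I * starRingEnd ℂ w / (‖w‖ : ℂ), ?_, ?_⟩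
    · simp [hn]
    · have : Complex.I * starRingEnd ℂ w / (‖w‖ : ℂ) * w = ((‖w‖ : ℝ) : ℂ) * Complex.I := by
        have hn' : (‖w‖ : ℂ) ≠ 0 := by exact_mod_cast hn
        field_simp
        rw [Complex.conj_mul']
      rw [key, this]
      simp

/-- Two forms that are traceless on the pair `u, v` vanish simultaneously on both members of a
pair obtained from `u, v` by a unitary change, which preserves traces of all forms. -/
lemma exists_common_isotropic (S T : H →L[ℂ] H) (u v : H)
    (hS : quadForm S u + quadForm S v = 0) (hT : quadForm T u + quadForm T v = 0) :
    ∃ a b : H, quadForm S a = 0 ∧ quadForm S b = 0 ∧ quadForm T a = 0 ∧ quadForm T b = 0 ∧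
      ∀ R : H →L[ℂ] H, quadForm R a + quadForm R b = quadForm R u + quadForm R v := by
  obtain ⟨c, s, hcs, h0⟩ := exists_rotation S u v hS
  have hrot := fun R : H →L[ℂ] H => quadForm_rotate_add R u v hcs
  set u' := (c : ℂ) • u + (s : ℂ) • v
  set v' := ((-s : ℝ) : ℂ) • u + (c : ℂ) • v
  have hSv' : quadForm S v' = 0 := by linarith [hrot S]
  obtain ⟨ω, hω, hcross⟩ := exists_phase S u' v'
  have hph : ∀ R : H →L[ℂ] H, quadForm R (ω • v') = quadForm R v' := fun R => by
    rw [quadForm_smul, hω]; ring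
  obtain ⟨d, r, hdr, hT0⟩ := exists_rotation T u' (ω • v') (by rw [hph, hrot, hT])
  have hrot' := fun R : H →L[ℂ] H => quadForm_rotate_add R u' (ω • v') hdr
  -- `S` vanishes on `u'`, on `ω • v'`, and has no cross term, hence on every real combination.
  have hSall : ∀ x y : ℝ, quadForm S ((x : ℂ) • u' + (y : ℂ) • (ω • v')) = 0 := fun x y => by
    rw [quadForm_real_comb, hcross, hph, hSv', h0]; ring
  refine ⟨_, _, hSall d r, hSall (-r) d, hT0, ?_, fun R => ?_⟩
  · have := hrot' T
    rw [hT0, hph, hrot T, hT] at this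
    linarith
  · rw [hrot', hph, hrot]

lemma quadForm_one (φ : H) : quadForm (1 : H →L[ℂ] H) φ = ‖φ‖ ^ 2 := by
  have := inner_self_eq_norm_sq (𝕜 := ℂ) φ
  simpa [quadForm] using this

lemma quadForm_sub_smul_one (T : H →L[ℂ] H) (c : ℝ) (φ : H) :
    quadForm (T - (c : ℂ) • (1 : H →L[ℂ] H)) φ = quadForm T φ - c * ‖φ‖ ^ 2 := by
  rw [← quadForm_one φ]
  simp [quadForm]

lemma quadForm_adjoint_mul [CompleteSpace H] (A : H →L[ℂ] H) (φ : H) :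
    quadForm (A.adjoint ∘L A) φ = ‖A φ‖ ^ 2 := by
  have := inner_self_eq_norm_sq (𝕜 := ℂ) (A φ)
  simpa [quadForm, ContinuousLinearMap.adjoint_inner_right] using this

/-- Toeplitz–Hausdorff: the joint range of `‖·‖²` and two quadratic forms is closed under
addition, hence a convex cone. -/
lemma exists_joint_add (S T : H →L[ℂ] H) (u v : H) :
    ∃ φ : H, ‖φ‖ ^ 2 = ‖u‖ ^ 2 + ‖v‖ ^ 2 ∧ quadForm S φ = quadForm S u + quadForm S v ∧
      quadForm T φ = quadForm T u + quadForm T v := by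
  set n := ‖u‖ ^ 2 + ‖v‖ ^ 2 with hn
  by_cases hn0 : n = 0
  · have hu : u = 0 := by
      have : ‖u‖ ^ 2 = 0 := by nlinarith [sq_nonneg ‖u‖, sq_nonneg ‖v‖]
      simpa using this
    have hv : v = 0 := by
      have : ‖v‖ ^ 2 = 0 := by nlinarith [sq_nonneg ‖u‖, sq_nonneg ‖v‖]
      simpa using this
    exact ⟨0, by simp [hn0], by simp [hu, hv, quadForm], by simp [hu, hv, quadForm]⟩
  have hnpos : 0 < n := lt_of_le_of_ne (by positivity) (Ne.symm hn0)
  set cS := (quadForm S u + quadForm S v) / n with hcS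
  set cT := (quadForm T u + quadForm T v) / n with hcT
  have hS : cS * n = quadForm S u + quadForm S v := by rw [hcS]; field_simp
  have hT : cT * n = quadForm T u + quadForm T v := by rw [hcT]; field_simp
  obtain ⟨a, b, hSa, hSb, hTa, hTb, htot⟩ := exists_common_isotropic
    (S - (cS : ℂ) • (1 : H →L[ℂ] H)) (T - (cT : ℂ) • (1 : H →L[ℂ] H)) u v
    (by rw [quadForm_sub_smul_one, quadForm_sub_smul_one]; linear_combination -hS - cS * hn)
    (by rw [quadForm_sub_smul_one, quadForm_sub_smul_one]; linear_combination -hT - cT * hn)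
  rw [quadForm_sub_smul_one] at hSa hSb hTa hTb
  have hmass := htot 1
  simp only [quadForm_one] at hmass
  -- A nonzero isotropic vector, rescaled to squared norm `n`, has the required values.
  have fin : ∀ x : H, x ≠ 0 → quadForm S x - cS * ‖x‖ ^ 2 = 0 →
      quadForm T x - cT * ‖x‖ ^ 2 = 0 →
      ∃ φ : H, ‖φ‖ ^ 2 = n ∧ quadForm S φ = quadForm S u + quadForm S v ∧
        quadForm T φ = quadForm T u + quadForm T v := by
    intro x hx h1 h2
    have hx0 : ‖x‖ ≠ 0 := norm_ne_zero_iff.mpr hx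
    have hk : ‖((√n / ‖x‖ : ℝ) : ℂ)‖ ^ 2 * ‖x‖ ^ 2 = n := by
      rw [Complex.norm_real, Real.norm_eq_abs, sq_abs, div_pow, Real.sq_sqrt hnpos.le]
      field_simp
    refine ⟨((√n / ‖x‖ : ℝ) : ℂ) • x, ?_, ?_, ?_⟩
    · rw [norm_smul, mul_pow, hk]
    · rw [quadForm_smul, sub_eq_zero.mp h1, mul_left_comm, hk, hS]
    · rw [quadForm_smul, sub_eq_zero.mp h2, mul_left_comm, hk, hT]
  by_cases ha : a = 0
  · refine fin b ?_ hSb hTb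
    rintro rfl
    simp [ha] at hmass
    exact hn0 (by rw [hn, ← hmass])
  · exact fin a ha hSa hTa

/-! ### The constrained norms and the transforms -/

lemma norm_apply_sq_le (A : H →L[ℂ] H) {φ : H} (h : ‖φ‖ ≤ 1) : ‖A φ‖ ^ 2 ≤ ‖A‖ ^ 2 := by
  have : ‖A φ‖ ≤ ‖A‖ := (A.le_opNorm φ).trans (mul_le_of_le_one_right (norm_nonneg _) h)
  gcongr

lemma le_fA (G A : H →L[ℂ] H) {E : ℝ} {φ : H} (h1 : ‖φ‖ ≤ 1) (h2 : quadForm G φ ≤ E) :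
    ‖A φ‖ ^ 2 ≤ fA G A E :=
  le_csSup ⟨‖A‖ ^ 2, by rintro _ ⟨φ, h, -, rfl⟩; exact norm_apply_sq_le A h⟩ ⟨φ, h1, h2, rfl⟩

lemma fA_set_nonempty (G A : H →L[ℂ] H) {E : ℝ} (hE : 0 ≤ E) :
    {y : ℝ | ∃ φ : H, ‖φ‖ ≤ 1 ∧ (⟪φ, G φ⟫_ℂ).re ≤ E ∧ y = ‖A φ‖ ^ 2}.Nonempty :=
  ⟨0, 0, by simp, by simpa using hE, by simp⟩

lemma fA_le (G A : H →L[ℂ] H) {E c : ℝ} (hE : 0 ≤ E)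
    (h : ∀ φ : H, ‖φ‖ ≤ 1 → quadForm G φ ≤ E → ‖A φ‖ ^ 2 ≤ c) : fA G A E ≤ c :=
  csSup_le (fA_set_nonempty G A hE) (by rintro _ ⟨φ, h1, h2, rfl⟩; exact h φ h1 h2)

lemma fA_nonneg (G A : H →L[ℂ] H) {E : ℝ} (hE : 0 ≤ E) : 0 ≤ fA G A E := by
  simpa using le_fA G A (E := E) (φ := 0) (by simp) (by simpa [quadForm] using hE)

lemma fA_mono (G A : H →L[ℂ] H) {x y : ℝ} (hx : 0 ≤ x) (hxy : x ≤ y) :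
    fA G A x ≤ fA G A y :=
  fA_le G A hx fun _ h1 h2 => le_fA G A h1 (h2.trans hxy)

lemma concaveOn_fA [CompleteSpace H] (G A : H →L[ℂ] H) : ConcaveOn ℝ (Ioi 0) (fA G A) := by
  refine ⟨convex_Ioi 0, ?_⟩
  intro x hx y hy p q hp hq hpq
  simp only [mem_Ioi, smul_eq_mul] at *
  refine le_of_forall_pos_le_add fun ε hε => ?_
  obtain ⟨_, ⟨φ, hφ1, hφ2, rfl⟩, hφ⟩ := exists_lt_of_lt_csSup (fA_set_nonempty G A hx.le)
    (show fA G A x - ε < fA G A x by linarith)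
  obtain ⟨_, ⟨ψ, hψ1, hψ2, rfl⟩, hψ⟩ := exists_lt_of_lt_csSup (fA_set_nonempty G A hy.le)
    (show fA G A y - ε < fA G A y by linarith)
  obtain ⟨χ, h1, h2, h3⟩ := exists_joint_add G (A.adjoint ∘L A)
    (((√p : ℝ) : ℂ) • φ) (((√q : ℝ) : ℂ) • ψ)
  have hsq : ∀ r : ℝ, 0 ≤ r → ‖((√r : ℝ) : ℂ)‖ ^ 2 = r := fun r hr => by
    rw [Complex.norm_real, Real.norm_eq_abs, sq_abs, Real.sq_sqrt hr]
  rw [norm_smul, norm_smul, mul_pow, mul_pow, hsq p hp, hsq q hq] at h1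
  rw [quadForm_smul, quadForm_smul, hsq p hp, hsq q hq] at h2 h3
  simp only [quadForm_adjoint_mul] at h3
  have hφs : ‖φ‖ ^ 2 ≤ 1 := pow_le_one₀ (norm_nonneg _) hφ1
  have hψs : ‖ψ‖ ^ 2 ≤ 1 := pow_le_one₀ (norm_nonneg _) hψ1
  have hχ : ‖χ‖ ≤ 1 := by
    rw [← sq_le_one_iff₀ (norm_nonneg _)]
    nlinarith
  have hχ2 : quadForm G χ ≤ p * x + q * y := by
    rw [h2]
    exact add_le_add (mul_le_mul_of_nonneg_left hφ2 hp) (mul_le_mul_of_nonneg_left hψ2 hq)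
  have := le_fA G A hχ hχ2
  have e1 := mul_le_mul_of_nonneg_left hφ.le hp
  have e2 := mul_le_mul_of_nonneg_left hψ.le hq
  have e3 : p * ε + q * ε = ε := by rw [← add_mul, hpq, one_mul]
  linarith

lemma le_Ftr_fA (G A : H →L[ℂ] H) {E t : ℝ} (hE : 0 < E) (ht : 0 < t) :
    fA G A (E * t) / (t + 1) ≤ Ftr (fA G A) E := by
  refine le_csSup ⟨‖A‖ ^ 2, ?_⟩ ⟨t, ht, rfl⟩
  rintro _ ⟨s, hs, rfl⟩
  have h1 : fA G A (E * s) ≤ ‖A‖ ^ 2 :=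
    fA_le G A (by positivity) fun _ h _ => norm_apply_sq_le A h
  have h2 := fA_nonneg G A (E := E * s) (by positivity)
  exact (div_le_self h2 (by linarith)).trans h1

lemma Ftr_le_s16 {f : ℝ → ℝ} {E c : ℝ} (h : ∀ t > 0, f (E * t) / (t + 1) ≤ c) : Ftr f E ≤ c :=
  csSup_le ⟨_, 1, one_pos, rfl⟩ (by rintro _ ⟨t, ht, rfl⟩; exact h t ht)

lemma le_gA (G A : H →L[ℂ] H) (hpos : ∀ φ : H, 0 ≤ quadForm G φ) {E : ℝ} (hE : 0 < E) {φ : H}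
    (h : ‖φ‖ ^ 2 + quadForm G φ / E ≤ 1) : ‖A φ‖ ^ 2 ≤ gA G A E := by
  refine le_csSup ⟨‖A‖ ^ 2, ?_⟩ ⟨φ, h, rfl⟩
  rintro _ ⟨ψ, hψ, rfl⟩
  apply norm_apply_sq_le
  rw [← sq_le_one_iff₀ (norm_nonneg _)]
  have : 0 ≤ quadForm G ψ / E := div_nonneg (hpos ψ) hE.le
  unfold quadForm at this
  linarith

lemma gA_le (G A : H →L[ℂ] H) {E c : ℝ}
    (h : ∀ φ : H, ‖φ‖ ^ 2 + quadForm G φ / E ≤ 1 → ‖A φ‖ ^ 2 ≤ c) : gA G A E ≤ c :=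
  csSup_le ⟨0, 0, by simp, by simp⟩ (by rintro _ ⟨φ, h1, rfl⟩; exact h φ h1)

lemma gA_eq_Ftr (G A : H →L[ℂ] H) (hpos : ∀ φ : H, 0 ≤ quadForm G φ) {E : ℝ} (hE : 0 < E) :
    gA G A E = Ftr (fA G A) E := by
  apply le_antisymm
  · refine gA_le G A fun φ hφ => ?_
    have hG : 0 ≤ quadForm G φ / E := div_nonneg (hpos φ) hE.le
    -- `φ` stretched by `√(t + 1)` is admissible for `fA` at energy `E * t`.
    have step : ∀ t > 0, (t + 1) * ‖φ‖ ^ 2 ≤ 1 → (t + 1) * (quadForm G φ / E) ≤ t →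
        ‖A φ‖ ^ 2 ≤ Ftr (fA G A) E := by
      intro t ht h1 h2
      refine le_trans ?_ (le_Ftr_fA G A hE ht)
      have hk : ‖((√(t + 1) : ℝ) : ℂ)‖ ^ 2 = t + 1 := by
        rw [Complex.norm_real, Real.norm_eq_abs, sq_abs, Real.sq_sqrt (by positivity)]
      have := le_fA G A (E := E * t) (φ := ((√(t + 1) : ℝ) : ℂ) • φ)
        (by rw [← sq_le_one_iff₀ (norm_nonneg _), norm_smul, mul_pow, hk]; exact h1)
        (by
          rw [quadForm_smul, hk]
          rw [← mul_div_assoc, div_le_iff₀ hE] at h2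
          linarith)
      rw [map_smul, norm_smul, mul_pow, hk] at this
      rw [le_div_iff₀ (by positivity)]
      linarith
    rcases eq_or_ne ‖φ‖ 0 with h0 | h0
    · rw [norm_eq_zero] at h0
      exact step 1 one_pos (by simp [h0]) (by simp [h0, quadForm])
    have hn : 0 < ‖φ‖ ^ 2 := by positivity
    rcases lt_or_ge (‖φ‖ ^ 2) 1 with hlt | hge
    · refine step (1 / ‖φ‖ ^ 2 - 1) ?_ ?_ ?_
      · rw [gt_iff_lt, sub_pos, lt_div_iff₀ hn]; linarith
      · rw [sub_add_cancel, one_div, inv_mul_cancel₀ hn.ne']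
      · have e : 1 / ‖φ‖ ^ 2 - 1 = 1 / ‖φ‖ ^ 2 * (1 - ‖φ‖ ^ 2) := by field_simp
        rw [sub_add_cancel, e]
        exact mul_le_mul_of_nonneg_left (by linarith) (by positivity)
    · -- Here `‖φ‖ = 1` and `φ` has zero energy, so the supremum is approached as `t → 0`.
      have hq : quadForm G φ ≤ 0 := by
        have h : quadForm G φ / E ≤ 0 := by linarith
        rw [div_le_iff₀ hE] at h
        linarith
      have hφ1 : ‖φ‖ ≤ 1 := by
        rw [← sq_le_one_iff₀ (norm_nonneg _)]; linarith
      have hF : 0 ≤ Ftr (fA G A) E :=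
        (div_nonneg (fA_nonneg G A (E := E * 1) (by positivity)) (by norm_num)).trans
          (le_Ftr_fA G A hE one_pos)
      refine le_of_forall_pos_le_add fun ε hε => ?_
      set F := Ftr (fA G A) E with hFdef
      have ht : 0 < ε / (F + 1) := by positivity
      have h1 := le_Ftr_fA G A hE ht
      rw [div_le_iff₀ (by positivity), ← hFdef] at h1
      have h2 := le_fA G A (E := E * (ε / (F + 1))) hφ1 (hq.trans (by positivity))
      have h3 : F * (ε / (F + 1)) ≤ ε := by
        rw [← mul_div_assoc, div_le_iff₀ (by positivity)]
        nlinarith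
      linarith
  · refine Ftr_le_s16 fun t ht => ?_
    rw [div_le_iff₀ (by positivity)]
    refine fA_le G A (by positivity) fun φ h1 h2 => ?_
    have hk : ‖((√(t + 1) : ℝ)⁻¹ : ℂ)‖ ^ 2 = (t + 1)⁻¹ := by
      rw [norm_inv, inv_pow, Complex.norm_real, Real.norm_eq_abs, sq_abs,
        Real.sq_sqrt (by positivity)]
    have hφs : ‖φ‖ ^ 2 ≤ 1 := pow_le_one₀ (norm_nonneg _) h1
    have h2' : quadForm G φ / E ≤ t := by rw [div_le_iff₀ hE]; linarith
    have := le_gA G A hpos hE (φ := ((√(t + 1) : ℝ)⁻¹ : ℂ) • φ) (by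
      rw [norm_smul, mul_pow, quadForm_smul, hk, mul_div_assoc, ← mul_add,
        inv_mul_le_iff₀ (by positivity)]
      linarith)
    rw [map_smul, norm_smul, mul_pow, hk, inv_mul_le_iff₀ (by positivity)] at this
    linarith

/-! ### Concave duality -/

/-- A concave function on `(0, ∞)` has a supporting line at every point. -/
lemma exists_support {f : ℝ → ℝ} (hf : ConcaveOn ℝ (Ioi 0) f) {E : ℝ} (hE : 0 < E) :
    ∃ b : ℝ, ∀ x > 0, f x ≤ f E + b * (x - E) := by
  have hc : ConvexOn ℝ (Ioi 0) (-f) := hf.neg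
  have hint : E ∈ interior (Ioi (0 : ℝ)) := by rwa [interior_Ioi]
  refine ⟨-derivWithin (-f) (Ioi E) E, fun x hx => ?_⟩
  rcases lt_trichotomy x E with h | rfl | h
  · have := (hc.slope_le_leftDeriv_of_mem_interior hx hint h).trans
      (hc.leftDeriv_le_rightDeriv_of_mem_interior hint)
    rw [slope_def_field, div_le_iff₀ (by linarith)] at this
    simp only [Pi.neg_apply] at this
    linarith
  · simp
  · have := hc.rightDeriv_le_slope_of_mem_interior hint hx h
    rw [slope_def_field, le_div_iff₀ (by linarith)] at this
    simp only [Pi.neg_apply] at this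
    linarith

lemma fA_eq_Gtr [CompleteSpace H] (G A : H →L[ℂ] H) (hpos : ∀ φ : H, 0 ≤ quadForm G φ)
    {E : ℝ} (hE : 0 < E) : fA G A E = Gtr (gA G A) E := by
  have hlow : ∀ y ∈ GSet (gA G A) E, fA G A E ≤ y := by
    rintro _ ⟨t, ht, rfl⟩
    rw [gA_eq_Ftr G A hpos (by positivity)]
    have h := le_Ftr_fA G A (E := E * t) (t := 1 / t) (by positivity) (by positivity)
    rw [div_le_iff₀ (by positivity), mul_assoc, mul_one_div_cancel ht.ne', mul_one] at h
    linarith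
  apply le_antisymm
  · exact le_csInf ⟨_, 1, one_pos, rfl⟩ hlow
  obtain ⟨b, hb⟩ := exists_support (concaveOn_fA G A) hE
  have hb0 : 0 ≤ b := by
    have h1 := hb (E + 1) (by positivity)
    have h2 := fA_mono G A hE.le (show E ≤ E + 1 by linarith)
    linarith
  have ha0 : 0 ≤ fA G A E - b * E := by
    refine le_of_forall_pos_le_add fun ε hε => ?_
    have hx : 0 < ε / (b + 1) := by positivity
    have h1 := hb _ hx
    have h2 := fA_nonneg G A hx.le
    have h3 : b * (ε / (b + 1)) ≤ ε := by
      rw [← mul_div_assoc, div_le_iff₀ (by positivity)]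
      nlinarith
    linarith
  refine le_of_forall_pos_le_add fun ε hε => ?_
  -- Raising both coefficients of the line makes them positive, so that the balancing value
  -- `t = a / (b * E)` makes sense.
  obtain ⟨δ, hδ, hδε⟩ : ∃ δ > 0, δ * (1 + E) = ε := ⟨ε / (1 + E), by positivity, by field_simp⟩
  obtain ⟨a', ha'⟩ : ∃ a', a' = fA G A E - b * E + δ := ⟨_, rfl⟩
  obtain ⟨b', hb'⟩ : ∃ b', b' = b + δ := ⟨_, rfl⟩
  have hapos : 0 < a' := by linarith
  have hbpos : 0 < b' := by linarith
  have hline : ∀ x > 0, fA G A x ≤ a' + b' * x := fun x hx => by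
    have := hb x hx
    have : 0 ≤ δ * x := by positivity
    rw [ha', hb']
    linarith
  obtain ⟨t, ht, htE⟩ : ∃ t > 0, b' * E * t = a' :=
    ⟨a' / (b' * E), by positivity, by field_simp⟩
  have hg : gA G A (E * t) ≤ a' := by
    rw [gA_eq_Ftr G A hpos (by positivity)]
    refine Ftr_le_s16 fun s hs => ?_
    rw [div_le_iff₀ (by positivity)]
    have := hline (E * t * s) (by positivity)
    linear_combination this + s * htE
  have hmem : Gtr (gA G A) E ≤ gA G A (E * t) * (1 + 1 / t) :=
    csInf_le ⟨_, hlow⟩ ⟨t, ht, rfl⟩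
  have h1 : gA G A (E * t) * (1 + 1 / t) ≤ a' * (1 + 1 / t) :=
    mul_le_mul_of_nonneg_right hg (by positivity)
  have h2 : a' * (1 + 1 / t) = a' + b' * E := by
    rw [← htE]; field_simp
  have h3 : a' + b' * E = fA G A E + ε := by rw [ha', hb', ← hδε]; ring
  linarith

/-- for a positive semidefinite selfadjoint `G` with lowest eigenvalue `0`
on a finite-dimensional complex Hilbert space, `g_A = F[f_A]` and `f_A = G[g_A]`. -/
theorem stmt_16 [FiniteDimensional ℂ H] (G A : H →L[ℂ] H)
    (hsa : ∀ φ ψ : H, ⟪G φ, ψ⟫_ℂ = ⟪φ, G ψ⟫_ℂ)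
    (hpos : ∀ φ : H, 0 ≤ (⟪φ, G φ⟫_ℂ).re)
    (hker : ∃ φ : H, φ ≠ 0 ∧ G φ = 0) :
    ∀ E > (0:ℝ), gA G A E = Ftr (fA G A) E ∧ fA G A E = Gtr (gA G A) E := by
  have : CompleteSpace H := FiniteDimensional.complete ℂ H
  exact fun E hE => ⟨gA_eq_Ftr G A hpos hE, fA_eq_Gtr G A hpos hE⟩
end

section
/- Let H be a finite-dimensional complex inner product space, let G be a positive semidefinite selfadjoint linear operator on H, and let A be a linear operator on H. Then the function E ↦ f_A(E) = sup{‖Aφ‖² : φ ∈ H, ‖φ‖ ≤ 1, ⟨φ, Gφ⟩ ≤ E} is concave on (0,∞), and f_A(E) tends to the square of the operator norm of A as E → +∞. -/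
/-!
Both claims concern the supremum of `‖Aφ‖²` over the feasible set `‖φ‖ ≤ 1`, `⟪φ, Gφ⟫ ≤ E`.

**Concavity.** The point is that over `ℂ` the joint range
`{(⟪φ, φ⟫, ⟪φ, Gφ⟫, ⟪φ, A†Aφ⟫) : φ ∈ H}` of three Hermitian forms is convex (a homogeneous version
of the Toeplitz–Hausdorff theorem), so a convex combination of two feasible values is again attained
by a single vector, feasible at the averaged energy. By homogeneity it is enough that for all `u`,
`v` some `φ` has `h(φ) = h(u) + h(v)` for each of the three forms `h`
(`exists_joint_form_eq_add`). A positive semidefinite `2 × 2` matrix of rank at most one with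
diagonal `P, Q` and off-diagonal entry `C` comes from a vector `φ` in the span of `u, v`, with
`h(φ) = P h(u) + Q h(v) + 2 Re (C h(u, v))` (`exists_vector_of_rank_one`). The space of Hermitian
`2 × 2` matrices has real dimension four, so some nonzero `X` is annihilated by the three real
functionals defined by the forms; then `1 - X / μ`, with `μ` the eigenvalue of `X` of largest modulus,
is positive semidefinite and singular, and each functional takes the same value on it as on the
identity, namely `h(u) + h(v)`.

**Limit.** For `E ≥ ‖G‖` the energy constraint follows from `‖φ‖ ≤ 1`, so `fA G A E = ‖A‖²`.
-/

open Set Filter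
open scoped InnerProductSpace

variable {H : Type*} [NormedAddCommGroup H] [InnerProductSpace ℂ H]

theorem form_smul_add_smul (T : H →L[ℂ] H) (hT : ∀ x y : H, ⟪T x, y⟫_ℂ = ⟪x, T y⟫_ℂ)
    (r : ℝ) (β : ℂ) (u v : H) :
    (⟪(r : ℂ) • u + β • v, T ((r : ℂ) • u + β • v)⟫_ℂ).re =
      r ^ 2 * (⟪u, T u⟫_ℂ).re + (β.re ^ 2 + β.im ^ 2) * (⟪v, T v⟫_ℂ).re
        + 2 * r * (β.re * (⟪u, T v⟫_ℂ).re - β.im * (⟪u, T v⟫_ℂ).im) := by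
  have hvu : ⟪v, T u⟫_ℂ = (starRingEnd ℂ) ⟪u, T v⟫_ℂ := by
    rw [inner_conj_symm, hT]
  simp only [map_add, map_smul, inner_add_left, inner_add_right, inner_smul_left,
    inner_smul_right, hvu, Complex.add_re, Complex.add_im, Complex.mul_re, Complex.mul_im, Complex.conj_re,
    Complex.conj_im, Complex.ofReal_re, Complex.ofReal_im]
  ring

/-- The matrix with diagonal `P, Q` and off-diagonal entry `x + iy` is positive semidefinite and
singular, hence of the form `z z*`; the vector is `z₁ u + z₂ v`. It serves all forms at once. -/
theorem exists_vector_of_rank_one (u v : H) {P Q x y : ℝ} (hP : 0 ≤ P) (hQ : 0 ≤ Q)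
    (hdet : x ^ 2 + y ^ 2 = P * Q) :
    ∃ φ : H, ∀ T : H →L[ℂ] H, (∀ x y : H, ⟪T x, y⟫_ℂ = ⟪x, T y⟫_ℂ) →
      (⟪φ, T φ⟫_ℂ).re = P * (⟪u, T u⟫_ℂ).re + Q * (⟪v, T v⟫_ℂ).re
        + 2 * (x * (⟪u, T v⟫_ℂ).re - y * (⟪u, T v⟫_ℂ).im) := by
  rcases hP.eq_or_lt with rfl | hP
  · have hx : x = 0 := by nlinarith [sq_nonneg x, sq_nonneg y]
    have hy : y = 0 := by nlinarith [sq_nonneg x, sq_nonneg y]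
    subst hx hy
    refine ⟨((0 : ℝ) : ℂ) • u + ((√Q : ℝ) : ℂ) • v, fun T hT => ?_⟩
    rw [form_smul_add_smul T hT]
    simp [Real.sq_sqrt hQ]
  · have hr : 0 < √P := Real.sqrt_pos.2 hP
    have hr2 : √P ^ 2 = P := Real.sq_sqrt hP.le
    refine ⟨((√P : ℝ) : ℂ) • u + (⟨x / √P, y / √P⟩ : ℂ) • v, fun T hT => ?_⟩
    rw [form_smul_add_smul T hT]
    have h1 : (x / √P) ^ 2 + (y / √P) ^ 2 = Q := by
      rw [div_pow, div_pow, hr2, ← add_div, hdet]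
      field_simp
    simp only [h1, hr2]
    field_simp

/-- Normalisation of the annihilated Hermitian matrix `X` with diagonal `p, q` and off-diagonal
entry `x + iy`: some multiple `t X` makes `1 + t X` positive semidefinite and singular. -/
theorem exists_singular_shift {p q x y : ℝ} (hne : ¬(p = 0 ∧ q = 0 ∧ x = 0 ∧ y = 0)) :
    ∃ t : ℝ, 0 ≤ 1 + t * p ∧ 0 ≤ 1 + t * q ∧
      (t * x) ^ 2 + (t * y) ^ 2 = (1 + t * p) * (1 + t * q) := by
  wlog hpq : 0 ≤ p + q generalizing p q x y
  · obtain ⟨t, h1, h2, h3⟩ := this (p := -p) (q := -q) (x := -x) (y := -y)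
      (by simpa using hne) (by linarith)
    exact ⟨-t, by linarith, by linarith, by linarith⟩
  -- `μ` is the larger eigenvalue, which has the larger modulus since the trace is nonnegative.
  set s := √((p - q) ^ 2 + 4 * (x ^ 2 + y ^ 2)) with hs
  have hs2 : s ^ 2 = (p - q) ^ 2 + 4 * (x ^ 2 + y ^ 2) := Real.sq_sqrt (by positivity)
  have hs0 : 0 ≤ s := Real.sqrt_nonneg _
  have habs : |p - q| ≤ s := Real.abs_le_sqrt (by nlinarith [sq_nonneg x, sq_nonneg y])
  obtain ⟨ha, hb⟩ := abs_le.1 habs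
  set μ := ((p + q) + s) / 2 with hμ
  have hμp : p ≤ μ := by linarith
  have hμq : q ≤ μ := by linarith
  have hμ0 : 0 < μ := by
    by_contra hcon
    have hs' : s = 0 := by linarith
    have hp : p = 0 := by linarith
    have hq : q = 0 := by linarith
    rw [hs', hp, hq] at hs2
    exact hne ⟨hp, hq, by nlinarith [sq_nonneg x, sq_nonneg y],
      by nlinarith [sq_nonneg x, sq_nonneg y]⟩
  have hchar : x ^ 2 + y ^ 2 = (μ - p) * (μ - q) := by
    rw [hμ]; linarith
  have e : ∀ a : ℝ, 1 + -μ⁻¹ * a = (μ - a) / μ := fun a => by field_simp; ring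
  refine ⟨-μ⁻¹, ?_, ?_, ?_⟩
  · rw [e]; exact div_nonneg (by linarith) hμ0.le
  · rw [e]; exact div_nonneg (by linarith) hμ0.le
  · rw [e, e, div_mul_div_comm, ← hchar]
    field_simp

/-- Convexity, in additive form, of the joint range of three Hermitian forms. -/
theorem exists_joint_form_eq_add (T : Fin 3 → H →L[ℂ] H)
    (hT : ∀ i, ∀ x y : H, ⟪T i x, y⟫_ℂ = ⟪x, T i y⟫_ℂ) (u v : H) :
    ∃ φ : H, ∀ i, (⟪φ, T i φ⟫_ℂ).re = (⟪u, T i u⟫_ℂ).re + (⟪v, T i v⟫_ℂ).re := by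
  -- Row `i` is the functional `X ↦ p hᵢ(u) + q hᵢ(v) + 2 Re ((x + iy) hᵢ(u, v))`.
  let M : Matrix (Fin 3) (Fin 4) ℝ := Matrix.of fun i =>
    ![(⟪u, T i u⟫_ℂ).re, (⟪v, T i v⟫_ℂ).re, 2 * (⟪u, T i v⟫_ℂ).re, -2 * (⟪u, T i v⟫_ℂ).im]
  have hker : LinearMap.ker (Matrix.toLin' M) ≠ ⊥ :=
    LinearMap.ker_ne_bot_of_finrank_lt (by simp)
  obtain ⟨w, hw, hw0⟩ := (Submodule.ne_bot_iff _).1 hker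
  have hrow : ∀ i, (⟪u, T i u⟫_ℂ).re * w 0 + (⟪v, T i v⟫_ℂ).re * w 1
      + 2 * (⟪u, T i v⟫_ℂ).re * w 2 + -2 * (⟪u, T i v⟫_ℂ).im * w 3 = 0 := fun i => by
    have := congrFun (LinearMap.mem_ker.1 hw) i
    simpa [M, Matrix.toLin'_apply, Matrix.mulVec, dotProduct, Fin.sum_univ_four] using this
  have hne : ¬(w 0 = 0 ∧ w 1 = 0 ∧ w 2 = 0 ∧ w 3 = 0) := fun ⟨h0, h1, h2, h3⟩ =>
    hw0 (by ext j; fin_cases j <;> assumption)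
  obtain ⟨t, hP, hQ, hdet⟩ := exists_singular_shift hne
  obtain ⟨φ, hφ⟩ := exists_vector_of_rank_one u v hP hQ hdet
  refine ⟨φ, fun i => ?_⟩
  rw [hφ (T i) (hT i)]
  linear_combination t * hrow i

theorem norm_sq_mem_upperBounds (G A : H →L[ℂ] H) (E : ℝ) :
    ‖A‖ ^ 2 ∈ upperBounds
      {y : ℝ | ∃ φ : H, ‖φ‖ ≤ 1 ∧ (⟪φ, G φ⟫_ℂ).re ≤ E ∧ y = ‖A φ‖ ^ 2} := by
  rintro y ⟨φ, hφ, -, rfl⟩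
  have := A.le_of_opNorm_le_of_le le_rfl hφ
  rw [mul_one] at this
  gcongr

/-- A convex combination of values attained at energies `E₁` and `E₂` is attained by one vector that
is feasible at the averaged energy: the joint range applied to `√a φ₁` and `√b φ₂`. -/
theorem exists_feasible_mix [CompleteSpace H] (G A : H →L[ℂ] H)
    (hsa : ∀ φ ψ : H, ⟪G φ, ψ⟫_ℂ = ⟪φ, G ψ⟫_ℂ) {E₁ E₂ a b : ℝ} (ha : 0 ≤ a) (hb : 0 ≤ b)
    (hab : a + b = 1) {φ₁ φ₂ : H} (h₁ : ‖φ₁‖ ≤ 1) (h₂ : ‖φ₂‖ ≤ 1)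
    (hE₁ : (⟪φ₁, G φ₁⟫_ℂ).re ≤ E₁) (hE₂ : (⟪φ₂, G φ₂⟫_ℂ).re ≤ E₂) :
    ∃ φ : H, ‖φ‖ ≤ 1 ∧ (⟪φ, G φ⟫_ℂ).re ≤ a * E₁ + b * E₂ ∧
      ‖A φ‖ ^ 2 = a * ‖A φ₁‖ ^ 2 + b * ‖A φ₂‖ ^ 2 := by
  let T : Fin 3 → H →L[ℂ] H := ![.id ℂ H, G, (ContinuousLinearMap.adjoint A).comp A]
  have hT : ∀ i, ∀ x y : H, ⟪T i x, y⟫_ℂ = ⟪x, T i y⟫_ℂ := by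
    intro i x y
    fin_cases i
    · simp [T]
    · exact hsa x y
    · simp [T, ContinuousLinearMap.adjoint_inner_left, ContinuousLinearMap.adjoint_inner_right]
  obtain ⟨φ, hφ⟩ := exists_joint_form_eq_add T hT (((√a : ℝ) : ℂ) • φ₁) (((√b : ℝ) : ℂ) • φ₂)
  have hscale : ∀ (S : H →L[ℂ] H) (c : ℝ) (ψ : H), 0 ≤ c →
      (⟪((√c : ℝ) : ℂ) • ψ, S (((√c : ℝ) : ℂ) • ψ)⟫_ℂ).re = c * (⟪ψ, S ψ⟫_ℂ).re := by
    intro S c ψ hc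
    rw [map_smul, inner_smul_left, inner_smul_right, Complex.conj_ofReal, Complex.re_ofReal_mul,
      Complex.re_ofReal_mul, ← mul_assoc, Real.mul_self_sqrt hc]
  simp only [hscale _ a _ ha, hscale _ b _ hb] at hφ
  have hid : ∀ ψ : H, (⟪ψ, T 0 ψ⟫_ℂ).re = ‖ψ‖ ^ 2 := fun ψ =>
    inner_self_eq_norm_sq (𝕜 := ℂ) ψ
  have hA : ∀ ψ : H, (⟪ψ, T 2 ψ⟫_ℂ).re = ‖A ψ‖ ^ 2 := fun ψ => by
    rw [← inner_self_eq_norm_sq (𝕜 := ℂ) (A ψ)]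
    simp [T, ContinuousLinearMap.adjoint_inner_right]
  have e0 := hφ 0
  have e1 : (⟪φ, G φ⟫_ℂ).re = a * (⟪φ₁, G φ₁⟫_ℂ).re + b * (⟪φ₂, G φ₂⟫_ℂ).re := hφ 1
  have e2 := hφ 2
  rw [hid, hid, hid] at e0
  rw [hA, hA, hA] at e2
  refine ⟨φ, ?_, ?_, e2⟩
  · have k₁ : ‖φ₁‖ ^ 2 ≤ 1 := pow_le_one₀ (norm_nonneg _) h₁
    have k₂ : ‖φ₂‖ ^ 2 ≤ 1 := pow_le_one₀ (norm_nonneg _) h₂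
    rw [← sq_le_one_iff₀ (norm_nonneg _), e0]
    nlinarith
  · rw [e1]
    gcongr

theorem fA_eq_of_norm_le (G A : H →L[ℂ] H) {E : ℝ} (hE : ‖G‖ ≤ E) : fA G A E = ‖A‖ ^ 2 := by
  have hfeas : ∀ φ : H, ‖φ‖ ≤ 1 → (⟪φ, G φ⟫_ℂ).re ≤ E := fun φ hφ => by
    have hG := G.le_of_opNorm_le_of_le le_rfl hφ
    calc (⟪φ, G φ⟫_ℂ).re ≤ ‖φ‖ * ‖G φ‖ := re_inner_le_norm (𝕜 := ℂ) φ (G φ)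
      _ ≤ 1 * ‖G φ‖ := by gcongr
      _ ≤ E := by linarith
  refine IsLUB.csSup_eq ⟨norm_sq_mem_upperBounds G A E, fun M hM => ?_⟩
    ⟨_, 0, by simp, hfeas 0 (by simp), rfl⟩
  have hM0 : 0 ≤ M := hM ⟨0, by simp, hfeas 0 (by simp), by simp⟩
  rw [← Real.le_sqrt (norm_nonneg _) hM0]
  refine le_of_forall_lt fun r hr => ?_
  obtain ⟨φ, hφ, hrφ⟩ := A.exists_lt_apply_of_lt_opNorm hr
  exact hrφ.trans_le (Real.le_sqrt_of_sq_le (hM ⟨φ, hφ.le, hfeas φ hφ.le, rfl⟩))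

/-- for a positive semidefinite selfadjoint operator `G` on a
finite-dimensional complex Hilbert space, `E ↦ f_A(E)` is concave on `(0,∞)` and
tends to the square of the operator norm of `A` as `E → +∞`. -/
theorem stmt_17 [FiniteDimensional ℂ H] (G A : H →L[ℂ] H)
    (hsa : ∀ φ ψ : H, ⟪G φ, ψ⟫_ℂ = ⟪φ, G ψ⟫_ℂ)
    (hpos : ∀ φ : H, 0 ≤ (⟪φ, G φ⟫_ℂ).re) :
    ConcaveOn ℝ (Ioi (0:ℝ)) (fA G A) ∧
      Tendsto (fA G A) atTop (nhds (‖A‖ ^ 2)) := by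
  have : CompleteSpace H := FiniteDimensional.complete ℂ H
  refine ⟨⟨convex_Ioi 0, ?_⟩, ?_⟩
  · intro E₁ hE₁ E₂ hE₂ a b ha hb hab
    simp only [smul_eq_mul]
    -- At positive energy the zero vector is feasible, so the set under the supremum is nonempty.
    have hne : ∀ E ∈ Ioi (0 : ℝ),
        {y : ℝ | ∃ φ : H, ‖φ‖ ≤ 1 ∧ (⟪φ, G φ⟫_ℂ).re ≤ E ∧ y = ‖A φ‖ ^ 2}.Nonempty :=
      fun E hE => ⟨_, 0, by simp, by simpa using (mem_Ioi.1 hE).le, rfl⟩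
    refine le_of_forall_pos_le_add fun ε hε => ?_
    obtain ⟨y₁, ⟨φ₁, h₁, g₁, rfl⟩, l₁⟩ :=
      exists_lt_of_lt_csSup (hne E₁ hE₁) (show fA G A E₁ - ε < _ from sub_lt_self _ hε)
    obtain ⟨y₂, ⟨φ₂, h₂, g₂, rfl⟩, l₂⟩ :=
      exists_lt_of_lt_csSup (hne E₂ hE₂) (show fA G A E₂ - ε < _ from sub_lt_self _ hε)
    obtain ⟨φ, hφ, hG, hA⟩ := exists_feasible_mix G A hsa ha hb hab h₁ h₂ g₁ g₂
    have hle : ‖A φ‖ ^ 2 ≤ fA G A (a * E₁ + b * E₂) :=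
      le_csSup ⟨_, norm_sq_mem_upperBounds G A _⟩ ⟨φ, hφ, hG, rfl⟩
    have m₁ := mul_le_mul_of_nonneg_left l₁.le ha
    have m₂ := mul_le_mul_of_nonneg_left l₂.le hb
    have hε' : a * ε + b * ε = ε := by rw [← add_mul, hab, one_mul]
    linarith
  · refine tendsto_const_nhds.congr' ?_
    filter_upwards [eventually_ge_atTop ‖G‖] with E hE
    exact (fA_eq_of_norm_le G A hE).symm
end
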